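/- arXiv:0909.2020 — 5 statements merged into one kernel-verified Lean document; each statement's English description precedes it below -/
import Mathlib

section
/- Let c ≠ 0, α ≠ 0, ε ∈ {1,−1} and let p be a positive integer, and suppose that NONE of the following four cases holds: (i) ε=1, c>0, α<0, p<4; (ii) ε=−1, c<0, α>0, p<4; (iii) ε=1, c<0, α<0, p>4; (iv) ε=−1, c>0, α>0, p>4. Then every real-valued Schwartz function φ on ℝ² satisfying (c − α|ξ₁| + ε ξ₂²)·𝓕φ(ξ₁,ξ₂) = (1/(p+1))·𝓕(φ^{p+1})(ξ₁,ξ₂) for all (ξ₁,ξ₂) ∈ ℝ² is identically zero. (Non-existence of nontrivial solitary waves for the generalized BO-ZK equation outside the four sign regimes.) -/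
open MeasureTheory

/-!
The proof is by Pohozaev identities, carried out on the Fourier side so that the Hilbert transform
never appears. In Mathlib's normalisation the equation is `M 𝓕φ = 𝓕(φ^(p+1)/(p+1))` with
`M ξ = c - a|ξ₁| + b ξ₂²`, `a = 2πα`, `b = 4π²ε`. By Plancherel, testing it with `φ` gives
`∫ M |𝓕φ|² = Q`, where `Q = ∫ φ^(p+2)/(p+1)`. Testing it with `x ∂ₓφ` (or `y ∂_yφ`), whose Fourier
transform is `-∂₁(ξ₁ 𝓕φ)`, and integrating by parts on both sides gives
`∫ ∂₁(ξ₁ M) |𝓕φ|² = 2Q/(p+2)`, and likewise with `∂₂(ξ₂ M)`. The weights are not smooth, but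
`ξ₁|ξ₁|` is differentiable with derivative `2|ξ₁|`, which is enough. This is `pohozaev`.

With `N = ∫ |𝓕φ|²`, `A = ∫ |ξ₁| |𝓕φ|²`, `B = ∫ ξ₂² |𝓕φ|²`, the two identities amount to
`a A = -2 b B` and `p c N = (4 - p) b B`. If `N > 0`, the second one forces `p ≠ 4` and `B > 0`, and
then the first one forces `A > 0`. Hence `α` has the sign of `-ε` and `c` that of `(4 - p) ε`, which
leaves exactly the four excluded regimes. So `N = 0` and `φ = 0`.
-/

/-- The Fourier transform on `ℝ²`: `𝓕f(ξ₁,ξ₂) = ∫ exp(−i(xξ₁+yξ₂)) f(x,y) dx dy`. -/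
noncomputable def FT (f : ℝ × ℝ → ℝ) (ξ : ℝ × ℝ) : ℂ :=
  ∫ x : ℝ × ℝ, Complex.exp (-Complex.I * ((x.1 * ξ.1 + x.2 * ξ.2 : ℝ) : ℂ)) * (f x : ℂ)

namespace BOZK

open Real SchwartzMap
open scoped FourierTransform LineDeriv SchwartzMap

section Derivatives

variable {V : Type*} [NormedAddCommGroup V] [InnerProductSpace ℝ V]

lemma hasLineDerivAt {F : Type*} [NormedAddCommGroup F] [NormedSpace ℝ F] (s : 𝓢(V, F)) (x v : V) :
    HasLineDerivAt ℝ s (∂_{v} s x) x v := by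
  rw [lineDerivOp_apply_eq_fderiv]
  exact (s.hasFDerivAt x).hasLineDerivAt v

lemma temperate (v : V) : (fun x : V => inner ℝ x v).HasTemperateGrowth :=
  Function.hasTemperateGrowth_inner_left v

lemma hasLineDerivAt_inner (v x : V) (hv : ‖v‖ = 1) :
    HasLineDerivAt ℝ (fun x : V => inner ℝ x v) 1 x v := by
  have : HasDerivAt (fun t : ℝ => inner ℝ x v + t) 1 0 := by
    simpa using (hasDerivAt_id (0 : ℝ)).const_add (inner ℝ x v)
  refine this.congr_of_eventuallyEq (.of_forall fun t => ?_)
  simp [inner_add_left, inner_smul_left, hv]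

lemma lineDeriv_eq {F : Type*} [NormedAddCommGroup F] [NormedSpace ℝ F] {s : 𝓢(V, F)} {x v : V}
    {y : F} (h : HasLineDerivAt ℝ s y x v) : ∂_{v} s x = y := by
  rw [lineDerivOp_apply, h.lineDeriv]

/-- The product rule `∂ᵥ(ℓh) = h + ℓ ∂ᵥh` for the coordinate `ℓ = ⟨·, v⟩` along a unit vector. -/
lemma lineDeriv_inner_smul (h : 𝓢(V, ℂ)) {v : V} (hv : ‖v‖ = 1) (x : V) :
    ∂_{v} (smulLeftCLM ℂ (fun x : V => inner ℝ x v) h) x = h x + (inner ℝ x v : ℝ) • ∂_{v} h x := by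
  apply lineDeriv_eq
  rw [smulLeftCLM_apply (temperate v)]
  have h1 := hasLineDerivAt_inner v x hv
  have h2 := hasLineDerivAt h x v
  have := HasDerivAt.smul h1 h2
  simp only [zero_smul, add_zero, one_smul] at this
  rw [add_comm]
  exact this

/-- The density `‖h‖²` as a real Schwartz function. -/
noncomputable def density (h : 𝓢(V, ℂ)) : 𝓢(V, ℝ) := pairing (innerSL ℝ) h h

lemma density_apply (h : 𝓢(V, ℂ)) (x : V) : density h x = ‖h x‖ ^ 2 := by
  exact real_inner_self_eq_norm_sq (h x)

lemma lineDeriv_density (h : 𝓢(V, ℂ)) (v x : V) :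
    ∂_{v} (density h) x = 2 * inner ℝ (h x) (∂_{v} h x) := by
  apply lineDeriv_eq
  have h2 := hasLineDerivAt h x v
  have := HasDerivAt.inner ℝ h2 h2
  have e : (density h : V → ℝ) = fun x => inner ℝ (h x) (h x) := rfl
  rw [e]
  simp only [zero_smul, add_zero, real_inner_comm (h x)] at this
  rw [two_mul]
  exact this

end Derivatives

section Pohozaev

variable {V : Type*} [NormedAddCommGroup V] [InnerProductSpace ℝ V] [FiniteDimensional ℝ V]
  [MeasurableSpace V] [BorelSpace V]

/-- Integration by parts against a Schwartz function. The weight `f` only needs a line derivative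
everywhere, which allows `f` such as `ξ₁|ξ₁|`; the growth of `f` and `f'` is controlled by asking
that they be integrable against every Schwartz function. -/
lemma integral_weight_mul_lineDeriv {f f' : V → ℝ} {v : V} (s : 𝓢(V, ℝ))
    (hf : ∀ x, HasLineDerivAt ℝ f (f' x) x v)
    (h0 : ∀ s : 𝓢(V, ℝ), Integrable fun x => f x * s x)
    (h1 : ∀ s : 𝓢(V, ℝ), Integrable fun x => f' x * s x) :
    ∫ x, f x * ∂_{v} s x = -∫ x, f' x * s x :=
  integral_bilinear_hasLineDerivAt_right_eq_neg_left_of_integrable (B := ContinuousLinearMap.mul ℝ ℝ)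
    (h1 s) (h0 _) (h0 s) (fun x _ => hf x) (fun x _ => hasLineDerivAt s x v)

/-- Weights that are integrable against every Schwartz function are stable under multiplication by
linear coordinates. -/
lemma integrable_inner_mul (v : V) {f : V → ℝ}
    (h : ∀ s : 𝓢(V, ℝ), Integrable fun x => f x * s x) (s : 𝓢(V, ℝ)) :
    Integrable fun x => inner ℝ x v * f x * s x := by
  refine (h (smulLeftCLM ℝ (fun x : V => inner ℝ x v) s)).congr (.of_forall fun x => ?_)
  simp only [smulLeftCLM_apply_apply (temperate v), smul_eq_mul]
  ring

/-- `𝓕(ℓ ∂ᵥψ) = -∂ᵥ(ℓ 𝓕ψ)` for `ℓ = ⟨·, v⟩`: the factors `±2πi` from the two exchange rules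
cancel. -/
lemma fourier_inner_lineDeriv (ψ : 𝓢(V, ℂ)) (v : V) :
    𝓕 (smulLeftCLM ℂ (fun x : V => inner ℝ x v) (∂_{v} ψ)) =
      -∂_{v} (smulLeftCLM ℂ (fun x : V => inner ℝ x v) (𝓕 ψ)) := by
  have h := lineDerivOp_fourier_eq (∂_{v} ψ) v
  rw [fourier_lineDerivOp_eq, LineDeriv.lineDerivOp_smul, neg_smul, FourierTransform.fourier_neg,
    FourierTransform.fourier_smul, ← smul_neg] at h
  have hpi : (2 * π * Complex.I : ℂ) ≠ 0 := by simp [pi_ne_zero]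
  have h' := smul_right_injective _ hpi h
  rw [h', neg_neg]

/-- Real part of Plancherel's theorem. -/
lemma integral_re_inner_fourier (X G : 𝓢(V, ℂ)) :
    ∫ ξ, inner ℝ (𝓕 X ξ) (𝓕 G ξ) = ∫ x, inner ℝ (X x) (G x) := by
  have key : ∀ X G : 𝓢(V, ℂ), ∫ x, inner ℝ (X x) (G x) = (∫ x, inner ℂ (X x) (G x)).re := by
    intro X G
    have hi : Integrable fun x => inner ℂ (X x) (G x) :=
      (G.integrable.norm.const_mul (SchwartzMap.seminorm ℝ 0 0 X)).mono'
        (X.continuous.inner G.continuous).aestronglyMeasurable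
        (.of_forall fun x => (norm_inner_le_norm _ _).trans
          (mul_le_mul_of_nonneg_right (norm_le_seminorm ℝ X x) (norm_nonneg _)))
    exact integral_re hi
  rw [key, key, integral_inner_fourier_fourier]

/-- The Pohozaev identity in the direction `v`. If `M 𝓕φ = 𝓕(φ^(p+1)/(p+1))` and
`F = ∂ᵥ(⟨·, v⟩ M)`, then `(p+2) ∫ F |𝓕φ|² = 2(p+1) ∫ M |𝓕φ|²`. It combines the equation tested with
`φ` and with `⟨·, v⟩ ∂ᵥφ`. Here `ψ` is `φ` as a complex function and `G` is the nonlinear term. -/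
lemma pohozaev {p : ℕ} (φ : 𝓢(V, ℝ)) (ψ G : 𝓢(V, ℂ)) (hψ : ∀ x, ψ x = (φ x : ℂ))
    (hG : ∀ x, G x = ((φ x ^ (p + 1) / (p + 1) : ℝ) : ℂ)) {M F : V → ℝ} {v : V} (hv : ‖v‖ = 1)
    (hM : ∀ ξ, (M ξ : ℂ) * 𝓕 ψ ξ = 𝓕 G ξ)
    (hF : ∀ ξ, HasLineDerivAt ℝ (fun ξ => inner ℝ ξ v * M ξ) (F ξ) ξ v)
    (hMi : ∀ s : 𝓢(V, ℝ), Integrable fun x => M x * s x)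
    (hFi : ∀ s : 𝓢(V, ℝ), Integrable fun x => F x * s x) :
    (p + 2) * ∫ ξ, F ξ * density (𝓕 ψ) ξ = 2 * (p + 1) * ∫ ξ, M ξ * density (𝓕 ψ) ξ := by
  have hp1 : (p + 1 : ℝ) ≠ 0 := by positivity
  have hp2 : (p + 2 : ℝ) ≠ 0 := by positivity
  have hin : ∀ (ξ : V) (z : ℂ), inner ℝ z (𝓕 G ξ) = M ξ * inner ℝ (𝓕 ψ ξ) z := by
    intro ξ z
    rw [← hM, ← Complex.real_smul, inner_smul_right, real_inner_comm]
  let u : 𝓢(V, ℝ) := smulLeftCLM ℝ (fun x => φ x ^ (p + 1)) φ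
  have hu : (u : V → ℝ) = fun x => φ x ^ (p + 2) := by
    have hg : (fun x => φ x ^ (p + 1)).HasTemperateGrowth := φ.hasTemperateGrowth.pow (p + 1)
    ext x
    simp only [u, smulLeftCLM_apply_apply hg, smul_eq_mul]
    ring
  have hdu : ∀ x, ∂_{v} u x = (p + 2) * φ x ^ (p + 1) * ∂_{v} φ x := by
    intro x
    apply lineDeriv_eq
    rw [hu]
    have := HasDerivAt.pow (hasLineDerivAt φ x v) (p + 2)
    simp only [zero_smul, add_zero, Nat.cast_add, Nat.cast_ofNat] at this
    exact this
  have hdψ : ∀ x, ∂_{v} ψ x = ((∂_{v} φ x : ℝ) : ℂ) := by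
    intro x
    apply lineDeriv_eq
    have e : (ψ : V → ℂ) = fun x => (φ x : ℂ) := funext hψ
    rw [e]
    exact HasDerivAt.ofReal_comp (hasLineDerivAt φ x v)
  -- The equation tested with `φ`.
  have E1 : ∫ ξ, M ξ * density (𝓕 ψ) ξ = (∫ x, u x) / (p + 1) := by
    have := integral_re_inner_fourier ψ G
    simp only [hin] at this
    rw [← integral_div]
    convert! this using 3 with x
    · rw [hu, hψ, hG, Complex.inner, Complex.conj_ofReal, ← Complex.ofReal_mul, Complex.ofReal_re]
      ring
  -- The real part of the equation tested with `⟨·, v⟩ ∂ᵥφ`; the nonlinear side is integrated by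
  -- parts, using `φ^(p+1) ∂ᵥφ = ∂ᵥ(φ^(p+2)) / (p+2)`.
  have E2 : ∫ ξ, (M ξ * density (𝓕 ψ) ξ + 1 / 2 * ((inner ℝ ξ v * M ξ) * ∂_{v} (density (𝓕 ψ)) ξ))
      = (∫ x, u x) / ((p + 1) * (p + 2)) := by
    have h3 := integral_re_inner_fourier (smulLeftCLM ℂ (fun x : V => inner ℝ x v) (∂_{v} ψ)) G
    have h4 : ∫ x, inner ℝ x v * ∂_{v} u x = -∫ x, 1 * u x :=
      integral_weight_mul_lineDeriv u (fun x => hasLineDerivAt_inner v x hv)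
        (fun s => by
          simpa using integrable_inner_mul v (f := fun _ => 1)
            (fun s => by simpa using s.integrable) s)
        (fun s => by simpa using s.integrable)
    simp only [one_mul] at h4
    rw [← neg_inj, ← neg_div, ← h4, ← integral_neg, ← integral_div]
    rw [fourier_inner_lineDeriv] at h3
    simp only [hin] at h3
    convert! h3 using 3 with ξ x
    · rw [neg_apply, lineDeriv_inner_smul _ hv, lineDeriv_density, density_apply, inner_neg_right,
        inner_add_right, inner_smul_right, real_inner_self_eq_norm_sq]
      ring
    · rw [smulLeftCLM_apply_apply (temperate v), hdψ, hG, hdu, Complex.real_smul, ← Complex.ofReal_mul,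
        Complex.inner,
        Complex.conj_ofReal, ← Complex.ofReal_mul, Complex.ofReal_re]
      field_simp
  have hLM := integrable_inner_mul v hMi
  rw [integral_add (hMi _) ((hLM _).const_mul _), integral_const_mul,
    integral_weight_mul_lineDeriv _ hF hLM hFi, E1] at E2
  rw [E1]
  generalize (∫ x, u x) = U at E2 ⊢
  generalize (∫ x, F x * density (𝓕 ψ) x) = I at E2 ⊢
  field_simp at E2 ⊢
  exact mul_left_cancel₀ hp1 (by linear_combination -E2)

end Pohozaev

/-- `t|t|` is differentiable also at `0`, although `|t|` is not. -/
lemma hasDerivAt_mul_abs (t : ℝ) : HasDerivAt (fun t : ℝ => t * |t|) (2 * |t|) t := by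
  rcases eq_or_ne t 0 with rfl | ht
  · rw [hasDerivAt_iff_tendsto_slope_zero]
    have : Filter.Tendsto (fun t : ℝ => |t|) (nhdsWithin 0 {0}ᶜ) (nhds |0|) :=
      (continuous_abs.tendsto 0).mono_left nhdsWithin_le_nhds
    simp only [abs_zero, mul_zero] at this ⊢
    refine this.congr' ?_
    filter_upwards [self_mem_nhdsWithin] with t ht
    have ht : t ≠ 0 := ht
    simp [ht]
  · have := (hasDerivAt_id t).mul (hasDerivAt_abs ht)
    refine this.congr_deriv ?_
    rcases ht.lt_or_gt with h | h
    · simp [abs_of_neg h, h]; ring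
    · simp [abs_of_pos h, h]; ring

/-- `ℝ²` with its Euclidean norm. -/
abbrev Plane := WithLp 2 (ℝ × ℝ)

/-- The first standard basis vector. -/
noncomputable def e₁ : Plane := WithLp.toLp 2 (1, 0)

/-- The second standard basis vector. -/
noncomputable def e₂ : Plane := WithLp.toLp 2 (0, 1)

lemma norm_e₁ : ‖e₁‖ = 1 := by simp [e₁]
lemma norm_e₂ : ‖e₂‖ = 1 := by simp [e₂]
lemma inner_e₁ (x : Plane) : inner ℝ x e₁ = x.fst := by simp [e₁, WithLp.prod_inner_apply]
lemma inner_e₂ (x : Plane) : inner ℝ x e₂ = x.snd := by simp [e₂, WithLp.prod_inner_apply]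

lemma integrable_snd_sq (s : 𝓢(Plane, ℝ)) : Integrable fun x => x.snd ^ 2 * s x := by
  have h := integrable_inner_mul e₂ (integrable_inner_mul e₂ (f := fun _ => 1)
    fun s => by simpa using s.integrable) s
  refine h.congr (.of_forall fun x => ?_)
  simp only [inner_e₂]
  ring

lemma integrable_abs_fst (s : 𝓢(Plane, ℝ)) : Integrable fun x => |x.fst| * s x := by
  have h := integrable_inner_mul e₁ (f := fun _ => 1) (fun s => by simpa using s.integrable) s
  refine h.mono ?_ (.of_forall fun x => ?_)
  · exact ((WithLp.prod_continuous_ofLp 2 ℝ ℝ).fst.abs.mul s.continuous).aestronglyMeasurable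
  · simp [-WithLp.prod_inner_apply, inner_e₁]

lemma integrable_weight (c a b : ℝ) (s : 𝓢(Plane, ℝ)) :
    Integrable fun x => (c - a * |x.fst| + b * x.snd ^ 2) * s x := by
  refine (((s.integrable.const_mul c).sub ((integrable_abs_fst s).const_mul a)).add
    ((integrable_snd_sq s).const_mul b)).congr (.of_forall fun x => ?_)
  simp only [Pi.add_apply, Pi.sub_apply]
  ring

lemma integral_weight (c a b : ℝ) (s : 𝓢(Plane, ℝ)) :
    ∫ x, (c - a * |x.fst| + b * x.snd ^ 2) * s x =
      c * (∫ x, s x) - a * (∫ x : Plane, |x.fst| * s x) + b * ∫ x : Plane, x.snd ^ 2 * s x := by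
  have h1 := s.integrable.const_mul c (μ := volume)
  have h2 := (integrable_abs_fst s).const_mul a
  have h3 := (integrable_snd_sq s).const_mul b
  have h12 : Integrable fun x : Plane => c * s x - a * (|x.fst| * s x) := h1.sub h2
  rw [← integral_const_mul, ← integral_const_mul, ← integral_const_mul, ← integral_sub h1 h2,
    ← integral_add h12 h3]
  congr 1
  ext x
  ring

lemma hasLineDerivAt_weight₁ (c a b : ℝ) (ξ : Plane) :
    HasLineDerivAt ℝ (fun ξ : Plane => inner ℝ ξ e₁ * (c - a * |ξ.fst| + b * ξ.snd ^ 2))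
      (c - 2 * a * |ξ.fst| + b * ξ.snd ^ 2) ξ e₁ := by
  have h0 : HasDerivAt (fun t : ℝ => ξ.fst + t) 1 0 := by
    simpa using (hasDerivAt_id (0 : ℝ)).const_add ξ.fst
  have h1 := (hasDerivAt_mul_abs (ξ.fst + 0)).comp (0 : ℝ) h0
  have h2 := (h0.mul_const (c + b * ξ.snd ^ 2)).sub (h1.const_mul a)
  refine (h2.congr_deriv ?_).congr_of_eventuallyEq (.of_forall fun t => ?_)
  · simp; ring
  · simp [e₁]; ring

lemma hasLineDerivAt_weight₂ (c a b : ℝ) (ξ : Plane) :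
    HasLineDerivAt ℝ (fun ξ : Plane => inner ℝ ξ e₂ * (c - a * |ξ.fst| + b * ξ.snd ^ 2))
      (c - a * |ξ.fst| + 3 * b * ξ.snd ^ 2) ξ e₂ := by
  have h0 : HasDerivAt (fun t : ℝ => ξ.snd + t) 1 0 := by
    simpa using (hasDerivAt_id (0 : ℝ)).const_add ξ.snd
  have h2 := (h0.mul_const (c - a * |ξ.fst|)).add ((h0.pow 3).const_mul b)
  refine (h2.congr_deriv ?_).congr_of_eventuallyEq (.of_forall fun t => ?_)
  · simp; ring
  · simp [e₂]; ring

lemma eq_zero_of_integral_density {ψ : 𝓢(Plane, ℂ)} (h : ∫ ξ, density (𝓕 ψ) ξ = 0) : ψ = 0 := by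
  simp only [density_apply] at h
  rw [integral_norm_sq_fourier] at h
  have hi : Integrable fun x => ‖ψ x‖ ^ 2 := by
    simp only [← density_apply]
    exact (density ψ).integrable
  rw [integral_eq_zero_iff_of_nonneg (fun x => by positivity) hi] at h
  have := (ψ.continuous.norm.pow 2).ae_eq_iff_eq volume continuous_zero |>.1 h
  ext x
  simpa using congrFun this x

/-- Comparison of `FT` with Mathlib's Fourier transform, whose kernel is `exp(-2πi⟨x, η⟩)`. -/
lemma FT_eq_fourier (f : ℝ × ℝ → ℝ) (η : Plane) :
    FT f (2 * π * η.fst, 2 * π * η.snd) = 𝓕 (fun x : Plane => (f (WithLp.ofLp x) : ℂ)) η := by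
  rw [FT, Real.fourier_eq', ← (WithLp.volume_preserving_ofLp ℝ ℝ).integral_comp
    (MeasurableEquiv.toLp 2 (ℝ × ℝ)).symm.measurableEmbedding]
  congr 1
  ext x
  rw [smul_eq_mul]
  congr 2
  simp [WithLp.prod_inner_apply]
  ring

end BOZK

open Real SchwartzMap
open scoped FourierTransform LineDeriv SchwartzMap

/-- Non-existence of nontrivial solitary waves for the generalized BO-ZK equation
outside the four sign regimes. -/
theorem nonexistence_solitary_waves (c α ε : ℝ) (p : ℕ)
    (hc : c ≠ 0) (hα : α ≠ 0) (hε : ε = 1 ∨ ε = -1) (hp : 0 < p)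
    (hnone : ¬ (ε = 1 ∧ 0 < c ∧ α < 0 ∧ (p : ℝ) < 4) ∧
             ¬ (ε = -1 ∧ c < 0 ∧ 0 < α ∧ (p : ℝ) < 4) ∧
             ¬ (ε = 1 ∧ c < 0 ∧ α < 0 ∧ 4 < (p : ℝ)) ∧
             ¬ (ε = -1 ∧ 0 < c ∧ 0 < α ∧ 4 < (p : ℝ))) :
    ∀ φ : SchwartzMap (ℝ × ℝ) ℝ,
      (∀ ξ : ℝ × ℝ,
        ((c - α * |ξ.1| + ε * ξ.2 ^ 2 : ℝ) : ℂ) * FT (fun x => φ x) ξ =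
          (1 / (p + 1) : ℂ) * FT (fun x => φ x ^ (p + 1)) ξ) →
      ∀ x : ℝ × ℝ, φ x = 0 := by
  intro φ h
  obtain ⟨h1, h2, h3, h4⟩ := hnone
  let ι : BOZK.Plane ≃L[ℝ] ℝ × ℝ := WithLp.prodContinuousLinearEquiv 2 ℝ ℝ ℝ
  let φ' : 𝓢(BOZK.Plane, ℝ) := SchwartzMap.compCLMOfContinuousLinearEquiv ℝ ι φ
  have hφ' : ∀ x, φ' x = φ (WithLp.ofLp x) := fun x => rfl
  let ψ : 𝓢(BOZK.Plane, ℂ) := φ'.postcompCLM Complex.ofRealCLM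
  have hψ : ∀ x, ψ x = (φ' x : ℂ) := fun x => rfl
  let G₀ : 𝓢(BOZK.Plane, ℂ) :=
    (SchwartzMap.smulLeftCLM ℝ (fun x => φ' x ^ p) φ').postcompCLM Complex.ofRealCLM
  let G : 𝓢(BOZK.Plane, ℂ) := (1 / (p + 1) : ℂ) • G₀
  have hG₀ : ∀ x, G₀ x = ((φ' x ^ (p + 1) : ℝ) : ℂ) := by
    intro x
    have hg : (fun x => φ' x ^ p).HasTemperateGrowth := φ'.hasTemperateGrowth.pow p
    simp [G₀, hg, pow_succ]
  have hG : ∀ x, G x = ((φ' x ^ (p + 1) / (p + 1) : ℝ) : ℂ) := by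
    intro x
    simp only [G, smul_apply, hG₀, smul_eq_mul]
    push_cast
    ring
  have hM : ∀ ξ : BOZK.Plane,
      ((c - 2 * π * α * |ξ.fst| + 4 * π ^ 2 * ε * ξ.snd ^ 2 : ℝ) : ℂ) * 𝓕 ψ ξ = 𝓕 G ξ := by
    intro ξ
    have := h (2 * π * ξ.fst, 2 * π * ξ.snd)
    rw [BOZK.FT_eq_fourier, BOZK.FT_eq_fourier] at this
    have e : (fun x : BOZK.Plane => ((φ (WithLp.ofLp x) ^ (p + 1) : ℝ) : ℂ)) = G₀ :=
      funext fun x => (hG₀ x).symm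
    rw [e] at this
    rw [FourierTransform.fourier_smul, smul_apply, smul_eq_mul, SchwartzMap.fourier_coe,
      SchwartzMap.fourier_coe]
    refine Eq.trans ?_ this
    congr 2
    rw [abs_mul, abs_of_pos (by positivity : 0 < 2 * π)]
    ring
  have P1 := BOZK.pohozaev φ' ψ G hψ hG BOZK.norm_e₁ hM
    (BOZK.hasLineDerivAt_weight₁ c (2 * π * α) (4 * π ^ 2 * ε))
    (BOZK.integrable_weight _ _ _) (BOZK.integrable_weight _ _ _)
  have P2 := BOZK.pohozaev φ' ψ G hψ hG BOZK.norm_e₂ hM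
    (BOZK.hasLineDerivAt_weight₂ c (2 * π * α) (4 * π ^ 2 * ε))
    (BOZK.integrable_weight _ _ _) (BOZK.integrable_weight _ _ _)
  simp only [BOZK.integral_weight] at P1 P2
  have hN : 0 ≤ ∫ ξ, BOZK.density (𝓕 ψ) ξ :=
    integral_nonneg fun ξ => by rw [BOZK.density_apply]; positivity
  have hA : 0 ≤ ∫ ξ : BOZK.Plane, |ξ.fst| * BOZK.density (𝓕 ψ) ξ :=
    integral_nonneg fun ξ => by rw [BOZK.density_apply]; positivity
  have hB : 0 ≤ ∫ ξ : BOZK.Plane, ξ.snd ^ 2 * BOZK.density (𝓕 ψ) ξ :=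
    integral_nonneg fun ξ => by rw [BOZK.density_apply]; positivity
  have key : ∫ ξ, BOZK.density (𝓕 ψ) ξ = 0 := by
    generalize (∫ ξ, BOZK.density (𝓕 ψ) ξ) = N at *
    generalize (∫ ξ : BOZK.Plane, |ξ.fst| * BOZK.density (𝓕 ψ) ξ) = A at *
    generalize (∫ ξ : BOZK.Plane, ξ.snd ^ 2 * BOZK.density (𝓕 ψ) ξ) = B at *
    have hp' : (0 : ℝ) < p := by exact_mod_cast hp
    have hπ := pi_pos
    -- In the frequency variable, `A` and `B` stand for `∫ φ 𝓗∂ₓφ` and `∫ φ_y²` up to positive factors.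
    have Q1 : α * A = -(4 * π) * ε * B := by
      have : (p + 2) * (2 * π) * (α * A) = (p + 2) * (2 * π) * (-(4 * π) * ε * B) := by
        linear_combination P2 - P1
      exact mul_left_cancel₀ (by positivity) this
    have Q2 : p * c * N = (4 - p) * (4 * π ^ 2) * ε * B := by
      linear_combination -P1 - 4 * π * Q1
    by_contra hN0
    have hNp : 0 < N := lt_of_le_of_ne hN (Ne.symm hN0)
    have hε0 : ε ≠ 0 := by rcases hε with rfl | rfl <;> norm_num
    have hBp : 0 < B := by
      refine lt_of_le_of_ne hB fun h0 => ?_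
      rw [← h0, mul_zero] at Q2
      exact mul_ne_zero (mul_ne_zero hp'.ne' hc) hN0 Q2
    have hAp : 0 < A := by
      refine lt_of_le_of_ne hA fun h0 => ?_
      rw [← h0, mul_zero] at Q1
      have : -(4 * π) * ε * B ≠ 0 := by simp [hε0, hBp.ne', hπ.ne']
      exact this Q1.symm
    obtain ⟨K, hK, hcK⟩ : ∃ K : ℝ, 0 < K ∧ c = K * (4 - p) * ε :=
      ⟨4 * π ^ 2 * B / (p * N), by positivity, by field_simp; linarith⟩
    obtain ⟨L, hL, hαL⟩ : ∃ L : ℝ, 0 < L ∧ α = -(L * ε) :=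
      ⟨4 * π * B / A, by positivity, by field_simp; linarith⟩
    rcases lt_trichotomy (p : ℝ) 4 with hlt | heq | hgt
    · have := mul_pos hK (sub_pos.2 hlt)
      rcases hε with rfl | rfl
      · exact h1 ⟨rfl, by linarith, by linarith, hlt⟩
      · exact h2 ⟨rfl, by linarith, by linarith, hlt⟩
    · exact hc (by rw [hcK, heq]; ring)
    · have := mul_neg_of_pos_of_neg hK (sub_neg.2 hgt)
      rcases hε with rfl | rfl
      · exact h3 ⟨rfl, by linarith, by linarith, hgt⟩
      · exact h4 ⟨rfl, by linarith, by linarith, hgt⟩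
  have hψ0 := BOZK.eq_zero_of_integral_density key
  intro x
  have := congrArg (fun s : 𝓢(BOZK.Plane, ℂ) => s (WithLp.toLp 2 x)) hψ0
  simpa [hψ, hφ'] using this
end

section
/- There is an absolute constant C > 0 such that: for every continuously differentiable g : ℝ → ℝ with g' bounded, and every f ∈ C_c^∞(ℝ), the function h(x) = (1/π)·∫_ℝ ((g(x)−g(z))/(x−z))·f'(z) dz (whose integrand is bounded in absolute value by (1/π)·‖g'‖_∞·|f'(z)|, hence the integral converges absolutely) satisfies ‖h‖_{L²(ℝ)} ≤ C·‖g'‖_{L^∞(ℝ)}·‖f‖_{L²(ℝ)}. -/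
open MeasureTheory

/-!
The commutator is estimated by duality, through holomorphic functions on the upper half-plane.

For bounded measurable `h` of compact support, let `F`, `W`, `G` be the Cauchy integrals of `f`, `h`
and `g` (`g` being first truncated to compact support, which costs nothing in its Lipschitz
constant `M`: `exists_cutoff`). On the line at height `ε` the function `Im G` is `π` times the
Poisson integral of `g`, and partial fractions for a product of two Cauchy kernels
(`bilinear_identity`) give

  `Im ∫ Im G · F' W dx = - ∫∫ f'(s) h(r) (V s - V r) / (s - r) ds dr`,

where `V` is a double Poisson integral of `g`, which converges to `π² g` as `ε → 0`. The right-hand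
side thus becomes a multiple of the pairing of `h` with the commutator.

On the left, `∫ G F' W dx = 0` by Cauchy's theorem, so `Im G` may be replaced by `conj G`, and
Green's formula followed by an integration by parts turns `∫ F' W conj G dx` into
`-4 ∫∫ (t - ε) F' W conj G'' dx dt`. The Littlewood-Paley identity controls `F'`
(`Dec.square_function`). Since `Im G'` is bounded by `π M`, the measure `(t - ε) |G''|² dx dt` is a
Carleson measure, and the embedding needed for `W` follows from Green's formula for
`(Im G')² |W|²` (`Dec.carleson`). Together they give `trilinear_bound`, hence `bilinear_bound`.
Testing with `h` equal to the commutator on a large interval, and letting the interval exhaust the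
line, yields the estimate with constant `4`.
-/

namespace CalderonCommutator

open Filter Topology Set
open scoped ComplexConjugate

/-- The point `x + i t` of the complex plane. -/
noncomputable def pt (x t : ℝ) : ℂ := (x : ℂ) + (t : ℂ) * Complex.I

@[simp] lemma pt_re (x t : ℝ) : (pt x t).re = x := by simp [pt]
@[simp] lemma pt_im (x t : ℝ) : (pt x t).im = t := by simp [pt]

lemma norm_pt_sq (x t : ℝ) : ‖pt x t‖ ^ 2 = x ^ 2 + t ^ 2 := by
  rw [← Complex.normSq_eq_norm_sq, Complex.normSq_apply, pt_re, pt_im]; ring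

lemma hasDerivAt_pt_left (x t : ℝ) : HasDerivAt (fun x : ℝ => pt x t) 1 x := by
  unfold pt
  exact (Complex.ofRealCLM.hasDerivAt (x := x)).add_const _

lemma hasDerivAt_pt_right (x t : ℝ) : HasDerivAt (fun t : ℝ => pt x t) Complex.I t := by
  unfold pt
  simpa using ((Complex.ofRealCLM.hasDerivAt (x := t)).mul_const Complex.I).const_add (x : ℂ)

lemma continuous_pt_left (t : ℝ) : Continuous (fun x : ℝ => pt x t) := by
  unfold pt; fun_prop

/-! ### The Poisson kernel -/

/-- `π` times the Poisson kernel of the upper half-plane. -/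
noncomputable def poi (t x : ℝ) : ℝ := t / (x ^ 2 + t ^ 2)

lemma poi_eq {t : ℝ} (ht : 0 < t) (x : ℝ) : poi t x = t⁻¹ * (1 + (x / t) ^ 2)⁻¹ := by
  unfold poi; field_simp; ring

lemma poi_nonneg {t : ℝ} (ht : 0 < t) (x : ℝ) : 0 ≤ poi t x := by
  unfold poi; positivity

lemma poi_even (t x y : ℝ) : poi t (x - y) = poi t (y - x) := by
  unfold poi; rw [show (x - y) ^ 2 = (y - x) ^ 2 by ring]

lemma poi_le {t : ℝ} (ht : 0 < t) (x : ℝ) : poi t x ≤ t⁻¹ := by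
  unfold poi
  rw [div_le_iff₀ (by positivity), inv_mul_eq_div, le_div_iff₀ ht]
  nlinarith [sq_nonneg x]

lemma continuous_poi {t : ℝ} (ht : 0 < t) : Continuous (poi t) := by
  unfold poi
  exact continuous_const.div (by fun_prop) (fun x => by positivity)

lemma integrable_poi {t : ℝ} (ht : 0 < t) : Integrable (poi t) := by
  have : poi t = fun x => t⁻¹ * (1 + (x / t) ^ 2)⁻¹ := funext (poi_eq ht)
  rw [this]
  exact (integrable_inv_one_add_sq.comp_div ht.ne').const_mul _

lemma integral_poi {t : ℝ} (ht : 0 < t) : ∫ x, poi t x = Real.pi := by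
  simp_rw [poi_eq ht]
  rw [integral_const_mul, Measure.integral_comp_div (fun x : ℝ => (1 + x ^ 2)⁻¹) t,
    integral_univ_inv_one_add_sq, abs_of_pos ht, smul_eq_mul]
  field_simp

lemma inv_sq_eq_poi {t : ℝ} (ht : 0 < t) (C x : ℝ) :
    C / (x ^ 2 + t ^ 2) = C / t * poi t x := by
  unfold poi; field_simp

lemma integrable_inv_sq {t : ℝ} (ht : 0 < t) (C : ℝ) :
    Integrable (fun x : ℝ => C / (x ^ 2 + t ^ 2)) := by
  simp_rw [inv_sq_eq_poi ht]
  exact (integrable_poi ht).const_mul _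

lemma integral_inv_sq {t : ℝ} (ht : 0 < t) (C : ℝ) :
    ∫ x : ℝ, C / (x ^ 2 + t ^ 2) = C * Real.pi / t := by
  simp_rw [inv_sq_eq_poi ht]
  rw [integral_const_mul, integral_poi ht]; ring

/-! ### Decaying holomorphic functions and Green's formula -/

/-- Holomorphic functions on the upper half-plane which are `O(1/|z|)` on every half-plane
`Im z ≥ ε` with `ε > 0`. -/
structure Dec (A : ℂ → ℂ) : Prop where
  diff : DifferentiableOn ℂ A {z | 0 < z.im}
  bound : ∀ ε > 0, ∃ C, 0 ≤ C ∧ ∀ z : ℂ, ε ≤ z.im → ‖A z‖ ≤ C / ‖z‖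

lemma isOpen_uhp : IsOpen {z : ℂ | 0 < z.im} := isOpen_lt continuous_const Complex.continuous_im

lemma norm_ge_of_im {z : ℂ} {ε : ℝ} (hz : ε ≤ z.im) : ε ≤ ‖z‖ :=
  hz.trans ((le_abs_self _).trans (Complex.abs_im_le_norm z))

lemma Dec.mul {A B : ℂ → ℂ} (hA : Dec A) (hB : Dec B) : Dec (fun z => A z * B z) := by
  refine ⟨hA.diff.mul hB.diff, fun ε hε => ?_⟩
  obtain ⟨C, hC, h1⟩ := hA.bound ε hε
  obtain ⟨D, hD, h2⟩ := hB.bound ε hε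
  refine ⟨C * D / ε, by positivity, fun z hz => ?_⟩
  have hzε := norm_ge_of_im hz
  have hz0 : 0 < ‖z‖ := hε.trans_le hzε
  rw [norm_mul]
  calc ‖A z‖ * ‖B z‖ ≤ (C / ‖z‖) * (D / ‖z‖) :=
        mul_le_mul (h1 z hz) (h2 z hz) (norm_nonneg _) (by positivity)
    _ ≤ (C / ‖z‖) * (D / ε) := by gcongr
    _ = C * D / ε / ‖z‖ := by ring

/-- Cauchy's estimate on the disc of radius `Im z / 2` about `z`. -/
lemma Dec.deriv_bound {A : ℂ → ℂ} (hA : Dec A) {ε : ℝ} (hε : 0 < ε) :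
    ∃ C, 0 ≤ C ∧ ∀ z : ℂ, ε ≤ z.im → ‖deriv A z‖ ≤ C / z.im / ‖z‖ := by
  obtain ⟨C, hC, h⟩ := hA.bound (ε / 2) (by positivity)
  refine ⟨4 * C, by positivity, fun z hz => ?_⟩
  have him : 0 < z.im := hε.trans_le hz
  have hzn := norm_ge_of_im (le_refl z.im)
  have key : ∀ w ∈ Metric.closedBall z (z.im / 2), z.im / 2 ≤ w.im ∧ ‖z‖ / 2 ≤ ‖w‖ := by
    intro w hw
    rw [Metric.mem_closedBall, dist_eq_norm] at hw
    have h1 := (Complex.abs_im_le_norm (w - z)).trans hw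
    rw [Complex.sub_im, abs_le] at h1
    have h2 := norm_sub_norm_le z w
    rw [norm_sub_rev] at h2
    constructor <;> linarith
  have := Complex.norm_deriv_le_of_forall_mem_sphere_norm_le (f := A) (c := z)
    (R := z.im / 2) (C := C / (‖z‖ / 2)) (by positivity) ?_ ?_
  · refine this.trans (le_of_eq ?_)
    field_simp; norm_num
  · refine (hA.diff.mono fun w hw => ?_).diffContOnCl
    rw [closure_ball _ (by positivity)] at hw
    exact lt_of_lt_of_le (by positivity) (key w hw).1
  · intro w hw
    obtain ⟨k1, k2⟩ := key w (Metric.sphere_subset_closedBall hw)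
    refine (h w (by linarith)).trans ?_
    gcongr
    linarith

lemma Dec.deriv_dec {A : ℂ → ℂ} (hA : Dec A) : Dec (deriv A) := by
  refine ⟨hA.diff.deriv isOpen_uhp, fun ε hε => ?_⟩
  obtain ⟨C, hC, h⟩ := hA.deriv_bound hε
  refine ⟨C / ε, by positivity, fun z hz => (h z hz).trans ?_⟩
  gcongr

lemma Dec.hasDerivAt {A : ℂ → ℂ} (hA : Dec A) {z : ℂ} (hz : 0 < z.im) :
    HasDerivAt A (deriv A z) z :=
  (hA.diff.differentiableAt (isOpen_uhp.mem_nhds hz)).hasDerivAt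

lemma Dec.hasDerivAt_left {A : ℂ → ℂ} (hA : Dec A) {t : ℝ} (ht : 0 < t) (x : ℝ) :
    HasDerivAt (fun x : ℝ => A (pt x t)) (deriv A (pt x t)) x := by
  have h := (hA.hasDerivAt (z := pt x t) (by simpa using ht)).comp x (hasDerivAt_pt_left x t)
  rwa [mul_one] at h

lemma Dec.hasDerivAt_right {A : ℂ → ℂ} (hA : Dec A) {t : ℝ} (ht : 0 < t) (x : ℝ) :
    HasDerivAt (fun t : ℝ => A (pt x t)) (deriv A (pt x t) * Complex.I) t :=
  (hA.hasDerivAt (z := pt x t) (by simpa using ht)).comp t (hasDerivAt_pt_right x t)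

lemma hasDerivAt_conj {f : ℝ → ℂ} {f' : ℂ} {x : ℝ} (h : HasDerivAt f f' x) :
    HasDerivAt (fun x => conj (f x)) (conj f') x := h.star

lemma Dec.continuous_left {A : ℂ → ℂ} (hA : Dec A) {t : ℝ} (ht : 0 < t) :
    Continuous (fun x : ℝ => A (pt x t)) :=
  continuous_iff_continuousAt.2 fun x => (hA.hasDerivAt_left ht x).continuousAt

lemma Dec.mul_bound {A B : ℂ → ℂ} (hA : Dec A) (hB : Dec B) {ε : ℝ} (hε : 0 < ε) :
    ∃ C, 0 ≤ C ∧ ∀ t ≥ ε, ∀ x : ℝ, ‖A (pt x t)‖ * ‖B (pt x t)‖ ≤ C / (x ^ 2 + t ^ 2) := by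
  obtain ⟨C, hC, h1⟩ := hA.bound ε hε
  obtain ⟨D, hD, h2⟩ := hB.bound ε hε
  refine ⟨C * D, by positivity, fun t ht x => ?_⟩
  rw [← norm_pt_sq]
  calc _ ≤ (C / ‖pt x t‖) * (D / ‖pt x t‖) :=
        mul_le_mul (h1 _ (by simpa using ht)) (h2 _ (by simpa using ht)) (norm_nonneg _)
          (by positivity)
    _ = _ := by ring

lemma Dec.integrable_norm_mul {A B : ℂ → ℂ} (hA : Dec A) (hB : Dec B) {t : ℝ} (ht : 0 < t) :
    Integrable (fun x : ℝ => ‖A (pt x t)‖ * ‖B (pt x t)‖) := by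
  obtain ⟨C, hC, h⟩ := hA.mul_bound hB ht
  refine (integrable_inv_sq ht C).mono'
    ((hA.continuous_left ht).norm.mul (hB.continuous_left ht).norm).aestronglyMeasurable ?_
  refine ae_of_all _ fun x => ?_
  rw [Real.norm_of_nonneg (by positivity)]
  exact h t le_rfl x

lemma Dec.integrable_mul {A B : ℂ → ℂ} (hA : Dec A) (hB : Dec B) {t : ℝ} (ht : 0 < t) :
    Integrable (fun x : ℝ => A (pt x t) * B (pt x t)) := by
  refine (hA.integrable_norm_mul hB ht).mono'
    ((hA.continuous_left ht).mul (hB.continuous_left ht)).aestronglyMeasurable ?_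
  exact ae_of_all _ fun x => (norm_mul _ _).le

lemma Dec.integrable_mul_conj {A B : ℂ → ℂ} (hA : Dec A) (hB : Dec B) {t : ℝ} (ht : 0 < t) :
    Integrable (fun x : ℝ => A (pt x t) * conj (B (pt x t))) := by
  refine (hA.integrable_norm_mul hB ht).mono' ((hA.continuous_left ht).mul
    (Complex.continuous_conj.comp (hB.continuous_left ht))).aestronglyMeasurable ?_
  exact ae_of_all _ fun x => by simp

/-- Differentiation in the height `t` under an integral over the horizontal line at height `t`. -/
lemma hasDerivAt_integral_height {Ψ Ψ' : ℝ → ℝ → ℂ}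
    (hc : ∀ t > 0, Continuous (Ψ t)) (hc' : ∀ t > 0, Continuous (Ψ' t))
    (hd : ∀ t > 0, ∀ x, HasDerivAt (fun t => Ψ t x) (Ψ' t x) t)
    (hb : ∀ ε > 0, ∃ C, ∀ t ≥ ε, ∀ x, ‖Ψ t x‖ ≤ C / (x ^ 2 + t ^ 2))
    (hb' : ∀ ε > 0, ∃ C, 0 ≤ C ∧ ∀ t ≥ ε, ∀ x, ‖Ψ' t x‖ ≤ C / (x ^ 2 + t ^ 2))
    {t : ℝ} (ht : 0 < t) :
    HasDerivAt (fun t => ∫ x, Ψ t x) (∫ x, Ψ' t x) t := by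
  obtain ⟨C, h⟩ := hb t ht
  obtain ⟨D, hD, h'⟩ := hb' (t / 2) (by positivity)
  refine (hasDerivAt_integral_of_dominated_loc_of_deriv_le (F := Ψ) (F' := Ψ') (s := Ioi (t / 2))
    (bound := fun x => D / (x ^ 2 + (t / 2) ^ 2)) (Ioi_mem_nhds (by linarith)) ?_ ?_ ?_ ?_ ?_ ?_).2
  · filter_upwards [lt_mem_nhds ht] with s hs using (hc s hs).aestronglyMeasurable
  · exact (integrable_inv_sq ht C).mono' (hc t ht).aestronglyMeasurable
      (ae_of_all _ fun x => h t le_rfl x)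
  · exact (hc' t ht).aestronglyMeasurable
  · refine ae_of_all _ fun x s hs => (h' s (le_of_lt hs) x).trans ?_
    have hs : t / 2 < s := hs
    gcongr
  · exact integrable_inv_sq (by positivity) D
  · exact ae_of_all _ fun x s hs => hd s (lt_trans (by positivity) hs) x

lemma norm_integral_le_of_inv_sq {Ψ : ℝ → ℂ} {C t : ℝ} (ht : 0 < t)
    (h : ∀ x, ‖Ψ x‖ ≤ C / (x ^ 2 + t ^ 2)) : ‖∫ x, Ψ x‖ ≤ C * Real.pi / t := by
  rw [← integral_inv_sq ht C]
  exact norm_integral_le_of_norm_le (integrable_inv_sq ht C) (ae_of_all _ h)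

lemma tendsto_zero_of_le_div {J : ℝ → ℂ} {C ε : ℝ} (h : ∀ t ≥ ε, ‖J t‖ ≤ C / t) :
    Tendsto J atTop (𝓝 0) := by
  rw [tendsto_zero_iff_norm_tendsto_zero]
  refine squeeze_zero' (Eventually.of_forall fun _ => norm_nonneg _)
    ((eventually_ge_atTop ε).mono h) ?_
  exact tendsto_const_nhds.div_atTop tendsto_id

/-- By Cauchy's theorem, the product of two decaying holomorphic functions has integral zero
over horizontal lines. -/
lemma Dec.integral_mul_eq_zero {A B : ℂ → ℂ} (hA : Dec A) (hB : Dec B) {t : ℝ} (ht : 0 < t) :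
    ∫ x, A (pt x t) * B (pt x t) = 0 := by
  -- The integral does not depend on the height `t`, and tends to `0` as `t → ∞`.
  set J : ℝ → ℂ := fun t => ∫ x, A (pt x t) * B (pt x t) with hJ
  have hderiv : ∀ t > 0, HasDerivAt J 0 t := by
    intro t ht
    have hx : ∫ x, (deriv A (pt x t) * B (pt x t) + A (pt x t) * deriv B (pt x t))
        = 0 := by
      apply integral_eq_zero_of_hasDerivAt_of_integrable
        (f := fun x => A (pt x t) * B (pt x t))
      · intro x; exact (hA.hasDerivAt_left ht x).mul (hB.hasDerivAt_left ht x)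
      · exact (hA.deriv_dec.integrable_mul hB ht).add (hA.integrable_mul hB.deriv_dec ht)
      · exact hA.integrable_mul hB ht
    have := hasDerivAt_integral_height (Ψ := fun t x => A (pt x t) * B (pt x t))
      (Ψ' := fun t x => Complex.I * (deriv A (pt x t) * B (pt x t)
        + A (pt x t) * deriv B (pt x t)))
      (fun t ht => (hA.continuous_left ht).mul (hB.continuous_left ht))
      (fun t ht => continuous_const.mul (((hA.deriv_dec.continuous_left ht).mul
        (hB.continuous_left ht)).add ((hA.continuous_left ht).mul (hB.deriv_dec.continuous_left ht))))
      (fun t ht x => by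
        refine ((hA.hasDerivAt_right ht x).mul (hB.hasDerivAt_right ht x)).congr_deriv ?_
        ring)
      (fun ε hε => by
        obtain ⟨C, -, h⟩ := hA.mul_bound hB hε
        exact ⟨C, fun t ht x => by simpa using h t ht x⟩)
      (fun ε hε => by
        obtain ⟨C, hC, h⟩ := hA.deriv_dec.mul_bound hB hε
        obtain ⟨D, hD, h'⟩ := hA.mul_bound hB.deriv_dec hε
        refine ⟨C + D, by positivity, fun t ht x => ?_⟩
        rw [norm_mul, Complex.norm_I, one_mul, add_div]
        refine (norm_add_le _ _).trans ?_
        rw [norm_mul, norm_mul]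
        exact add_le_add (h t ht x) (h' t ht x)) ht
    rwa [integral_const_mul, hx, mul_zero] at this
  obtain ⟨C, hC, hb⟩ := hA.mul_bound hB ht
  have hlim : Tendsto J atTop (𝓝 0) := by
    refine tendsto_zero_of_le_div (ε := t) (C := C * Real.pi) fun s hs => ?_
    exact norm_integral_le_of_inv_sq (ht.trans_le hs) fun x => by
      rw [norm_mul]; exact hb s hs x
  have := integral_Ioi_of_hasDerivAt_of_tendsto (f := J) (f' := fun _ => 0) (a := t)
    (hderiv t ht).continuousAt.continuousWithinAt (fun s hs => hderiv s (ht.trans hs))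
    (integrableOn_zero) hlim
  simp at this
  exact this

/-- Integration by parts along a horizontal line. -/
lemma Dec.integral_parts {A B : ℂ → ℂ} (hA : Dec A) (hB : Dec B) {t : ℝ} (ht : 0 < t) :
    ∫ x, A (pt x t) * conj (deriv B (pt x t)) = - ∫ x, deriv A (pt x t) * conj (B (pt x t)) := by
  have hx : ∫ x, (deriv A (pt x t) * conj (B (pt x t))
      + A (pt x t) * conj (deriv B (pt x t))) = 0 := by
    apply integral_eq_zero_of_hasDerivAt_of_integrable
      (f := fun x => A (pt x t) * conj (B (pt x t)))
    · intro x; exact (hA.hasDerivAt_left ht x).mul (hasDerivAt_conj (hB.hasDerivAt_left ht x))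
    · exact (hA.deriv_dec.integrable_mul_conj hB ht).add (hA.integrable_mul_conj hB.deriv_dec ht)
    · exact hA.integrable_mul_conj hB ht
  rw [integral_add (hA.deriv_dec.integrable_mul_conj hB ht)
    (hA.integrable_mul_conj hB.deriv_dec ht)] at hx
  linear_combination hx

lemma Dec.hasDerivAt_integral {A B : ℂ → ℂ} (hA : Dec A) (hB : Dec B) {t : ℝ} (ht : 0 < t) :
    HasDerivAt (fun t => ∫ x, A (pt x t) * conj (B (pt x t)))
      (2 * Complex.I * ∫ x, deriv A (pt x t) * conj (B (pt x t))) t := by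
  have := hasDerivAt_integral_height (Ψ := fun t x => A (pt x t) * conj (B (pt x t)))
      (Ψ' := fun t x => Complex.I * (deriv A (pt x t) * conj (B (pt x t))
        - A (pt x t) * conj (deriv B (pt x t))))
      (fun t ht => (hA.continuous_left ht).mul
        (Complex.continuous_conj.comp (hB.continuous_left ht)))
      (fun t ht => continuous_const.mul (((hA.deriv_dec.continuous_left ht).mul
        (Complex.continuous_conj.comp (hB.continuous_left ht))).sub ((hA.continuous_left ht).mul
        (Complex.continuous_conj.comp (hB.deriv_dec.continuous_left ht)))))
      (fun t ht x => by
        refine ((hA.hasDerivAt_right ht x).mul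
          (hasDerivAt_conj (hB.hasDerivAt_right ht x))).congr_deriv ?_
        rw [map_mul, Complex.conj_I]; ring)
      (fun ε hε => by
        obtain ⟨C, -, h⟩ := hA.mul_bound hB hε
        exact ⟨C, fun t ht x => by simpa using h t ht x⟩)
      (fun ε hε => by
        obtain ⟨C, hC, h⟩ := hA.deriv_dec.mul_bound hB hε
        obtain ⟨D, hD, h'⟩ := hA.mul_bound hB.deriv_dec hε
        refine ⟨C + D, by positivity, fun t ht x => ?_⟩
        rw [norm_mul, Complex.norm_I, one_mul, add_div]
        refine (norm_sub_le _ _).trans ?_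
        rw [norm_mul, norm_mul, RCLike.norm_conj, RCLike.norm_conj]
        exact add_le_add (h t ht x) (h' t ht x)) ht
  refine this.congr_deriv ?_
  rw [integral_const_mul, integral_sub (hA.deriv_dec.integrable_mul_conj hB ht)
    (hA.integrable_mul_conj hB.deriv_dec ht), hA.integral_parts hB ht]
  ring

/-- Green's formula on the half-plane `t > ε`: the integral of `A conj B` over the line `t = ε` is
that of `(t - ε) Δ(A conj B)` over the half-plane, and `Δ(A conj B) = 4 A' conj B'`. -/
lemma Dec.green {A B : ℂ → ℂ} (hA : Dec A) (hB : Dec B) {ε : ℝ} (hε : 0 < ε) :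
    IntegrableOn (fun t : ℝ => ((t - ε : ℝ) : ℂ) *
      ∫ x, deriv A (pt x t) * conj (deriv B (pt x t))) (Ioi ε) ∧
    4 * ∫ t in Ioi ε, ((t - ε : ℝ) : ℂ) * ∫ x, deriv A (pt x t) * conj (deriv B (pt x t))
      = ∫ x, A (pt x ε) * conj (B (pt x ε)) := by
  set J : ℝ → ℂ := fun t => ∫ x, A (pt x t) * conj (B (pt x t)) with hJ
  set J1 : ℝ → ℂ := fun t => 2 * Complex.I * ∫ x, deriv A (pt x t) * conj (B (pt x t))
    with hJ1
  set J2 : ℝ → ℂ := fun t => ∫ x, deriv A (pt x t) * conj (deriv B (pt x t)) with hJ2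
  -- `J'' = 4 J2`, so that `(t - ε) J' - J` is a primitive of `4 (t - ε) J2`.
  have d0 : ∀ t > 0, HasDerivAt J (J1 t) t := fun t ht => hA.hasDerivAt_integral hB ht
  have d1 : ∀ t > 0, HasDerivAt J1 (4 * J2 t) t := by
    intro t ht
    refine ((hA.deriv_dec.hasDerivAt_integral hB ht).const_mul (2 * Complex.I)).congr_deriv ?_
    have := hA.deriv_dec.integral_parts hB ht
    rw [eq_neg_iff_add_eq_zero, add_comm, ← eq_neg_iff_add_eq_zero] at this
    rw [this]
    change 2 * Complex.I * (2 * Complex.I * -J2 t) = 4 * J2 t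
    linear_combination (-4 * J2 t) * Complex.I_sq
  have d2 : ∃ J3 : ℝ → ℂ, ∀ t > 0, HasDerivAt J2 (J3 t) t :=
    ⟨_, fun t ht => hA.deriv_dec.hasDerivAt_integral hB.deriv_dec ht⟩
  obtain ⟨C, hC, hAb⟩ := hA.bound ε hε
  obtain ⟨D, hD, hBb⟩ := hB.bound ε hε
  obtain ⟨C', hC', hAb'⟩ := hA.deriv_bound hε
  obtain ⟨D', hD', hBb'⟩ := hB.deriv_bound hε
  have b0 : ∀ t ≥ ε, ‖J t‖ ≤ C * D * Real.pi / t := by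
    intro t ht
    refine norm_integral_le_of_inv_sq (hε.trans_le ht) fun x => ?_
    rw [norm_mul, RCLike.norm_conj, ← norm_pt_sq]
    refine (mul_le_mul (hAb _ (by simpa using ht)) (hBb _ (by simpa using ht)) (norm_nonneg _)
      (by positivity)).trans (le_of_eq ?_)
    ring
  have b1 : ∀ t ≥ ε, ‖J1 t‖ ≤ 2 * (C' * D / t * Real.pi / t) := by
    intro t ht
    simp only [hJ1, norm_mul, Complex.norm_I, Complex.norm_ofNat, mul_one]
    refine mul_le_mul_of_nonneg_left ?_ (by norm_num)
    refine norm_integral_le_of_inv_sq (hε.trans_le ht) fun x => ?_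
    rw [norm_mul, RCLike.norm_conj, ← norm_pt_sq]
    have ht0 := hε.trans_le ht
    refine (mul_le_mul (hAb' _ (by simpa using ht)) (hBb _ (by simpa using ht)) (norm_nonneg _)
      (by rw [pt_im]; positivity)).trans (le_of_eq ?_)
    rw [pt_im]; ring
  have b2 : ∀ t ≥ ε, ‖J2 t‖ ≤ C' * D' / t ^ 2 * Real.pi / t := by
    intro t ht
    refine norm_integral_le_of_inv_sq (hε.trans_le ht) fun x => ?_
    rw [norm_mul, RCLike.norm_conj, ← norm_pt_sq]
    have ht0 := hε.trans_le ht
    refine (mul_le_mul (hAb' _ (by simpa using ht)) (hBb' _ (by simpa using ht)) (norm_nonneg _)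
      (by rw [pt_im]; positivity)).trans (le_of_eq ?_)
    rw [pt_im]; ring
  have hint : IntegrableOn (fun t : ℝ => ((t - ε : ℝ) : ℂ) * J2 t) (Ioi ε) := by
    obtain ⟨J3, d2⟩ := d2
    have hr := (integrableOn_Ioi_rpow_of_lt (a := -2) (by norm_num) hε).const_mul
      (C' * D' * Real.pi)
    refine Integrable.mono' hr ?_ ?_
    · refine ContinuousOn.aestronglyMeasurable ?_ measurableSet_Ioi
      refine ContinuousOn.mul (by fun_prop) fun t ht => ?_
      exact (d2 t (hε.trans ht)).continuousAt.continuousWithinAt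
    · refine (ae_restrict_iff' measurableSet_Ioi).2 (ae_of_all _ fun t ht => ?_)
      have ht : ε < t := ht
      have ht0 := hε.trans ht
      rw [norm_mul, Complex.norm_real, Real.norm_of_nonneg (by linarith),
        Real.rpow_neg ht0.le]
      calc (t - ε) * ‖J2 t‖ ≤ t * (C' * D' / t ^ 2 * Real.pi / t) :=
            mul_le_mul (by linarith) (b2 t ht.le) (norm_nonneg _) ht0.le
        _ = C' * D' * Real.pi * (t ^ (2 : ℝ))⁻¹ := by
            rw [show (2 : ℝ) = (2 : ℕ) by norm_num, Real.rpow_natCast]; field_simp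
  refine ⟨hint, ?_⟩
  have hK : ∀ t > 0, HasDerivAt (fun t : ℝ => ((t - ε : ℝ) : ℂ) * J1 t - J t)
      (4 * (((t - ε : ℝ) : ℂ) * J2 t)) t := by
    intro t ht
    have hl : HasDerivAt (fun t : ℝ => ((t - ε : ℝ) : ℂ)) 1 t := by
      simpa using ((hasDerivAt_id t).sub_const ε).ofReal_comp
    refine ((hl.mul (d1 t ht)).sub (d0 t ht)).congr_deriv ?_
    ring
  have hlim : Tendsto (fun t : ℝ => ((t - ε : ℝ) : ℂ) * J1 t - J t) atTop (𝓝 0) := by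
    refine tendsto_zero_of_le_div (ε := ε)
      (C := 2 * C' * D * Real.pi + C * D * Real.pi) fun t ht => ?_
    have ht0 := hε.trans_le ht
    refine (norm_sub_le _ _).trans ?_
    rw [add_div]
    refine add_le_add ?_ (b0 t ht)
    rw [norm_mul, Complex.norm_real, Real.norm_of_nonneg (by linarith)]
    calc (t - ε) * ‖J1 t‖ ≤ t * (2 * (C' * D / t * Real.pi / t)) :=
          mul_le_mul (by linarith) (b1 t ht) (norm_nonneg _) ht0.le
      _ = _ := by field_simp
  have := integral_Ioi_of_hasDerivAt_of_tendsto (a := ε)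
    (hK ε hε).continuousAt.continuousWithinAt (fun s hs => hK s (hε.trans hs))
    (hint.const_mul 4) hlim
  rw [integral_const_mul] at this
  rw [this]; simp [hJ]

/-! ### Square function estimates -/

/-- The square of the `L²` norm of `A` on the horizontal line at height `t`. -/
noncomputable def energy (A : ℂ → ℂ) (t : ℝ) : ℝ := ∫ x, ‖A (pt x t)‖ ^ 2

lemma energy_nonneg (A : ℂ → ℂ) (t : ℝ) : 0 ≤ energy A t :=
  integral_nonneg fun _ => by positivity

lemma ofReal_energy (A : ℂ → ℂ) (t : ℝ) :
    ((energy A t : ℝ) : ℂ) = ∫ x, A (pt x t) * conj (A (pt x t)) := by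
  simp_rw [Complex.mul_conj, Complex.normSq_eq_norm_sq]
  exact (integral_ofReal (𝕜 := ℂ)).symm

lemma Dec.integrable_sq {A : ℂ → ℂ} (hA : Dec A) {t : ℝ} (ht : 0 < t) :
    Integrable (fun x => ‖A (pt x t)‖ ^ 2) := by
  simpa [sq] using hA.integrable_norm_mul hA ht

lemma Dec.continuousAt_energy {A : ℂ → ℂ} (hA : Dec A) {t : ℝ} (ht : 0 < t) :
    ContinuousAt (energy A) t := by
  have h := Complex.continuous_re.continuousAt.comp (hA.hasDerivAt_integral hA ht).continuousAt
  simp_rw [← ofReal_energy] at h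
  exact h

/-- The Littlewood-Paley identity `4 ∫∫ (t - ε) |A'|² = ∫ |A|²`. -/
lemma Dec.square_function {A : ℂ → ℂ} (hA : Dec A) {ε : ℝ} (hε : 0 < ε) :
    IntegrableOn (fun t => (t - ε) * energy (deriv A) t) (Ioi ε) ∧
    4 * ∫ t in Ioi ε, (t - ε) * energy (deriv A) t = energy A ε := by
  obtain ⟨h1, h2⟩ := hA.green hA hε
  simp_rw [← ofReal_energy, ← Complex.ofReal_mul] at h1 h2
  have h3 : ∫ t in Ioi ε, (((t - ε) * energy (deriv A) t : ℝ) : ℂ)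
      = ((∫ t in Ioi ε, (t - ε) * energy (deriv A) t : ℝ) : ℂ) := integral_ofReal (𝕜 := ℂ)
  rw [h3] at h2
  exact ⟨h1.re, by exact_mod_cast h2⟩

/-- The pointwise lower bound for the Laplacian of `u² |W|²`, where `u` is the imaginary part of
a holomorphic function `D`; here `d = D'` and `w' = W'`. Since `2 u² = |D|² - Re D²`, that Laplacian
is `2 |(D W)'|² - 2 Re ((D² W)' conj W')`, the quantity in brackets. -/
lemma laplacian_lower_bound (D d w w' : ℂ) {m : ℝ} (hm : |D.im| ≤ m) :
    ‖d * w‖ ^ 2 ≤ 12 * m ^ 2 * ‖w'‖ ^ 2 + (2 * ‖d * w + D * w'‖ ^ 2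
      - 2 * (((2 * D * d) * w + D * D * w') * conj w').re) := by
  have h1 : 2 * ‖d * w + D * w'‖ ^ 2 - 2 * (((2 * D * d) * w + D * D * w') * conj w').re
      = 2 * ‖d * w‖ ^ 2 + 4 * D.im ^ 2 * ‖w'‖ ^ 2
        + 4 * D.im * ((d * w) * conj w').im * 2 := by
    simp only [← Complex.normSq_eq_norm_sq, Complex.normSq_apply, Complex.add_re, Complex.add_im,
      Complex.mul_re, Complex.mul_im, Complex.conj_re, Complex.conj_im, Complex.re_ofNat,
      Complex.im_ofNat]
    ring
  have h2 : |((d * w) * conj w').im| ≤ ‖d * w‖ * ‖w'‖ := by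
    refine (Complex.abs_im_le_norm _).trans ?_
    rw [norm_mul, RCLike.norm_conj]
  have h3 : |D.im * ((d * w) * conj w').im| ≤ |D.im| * (‖d * w‖ * ‖w'‖) := by
    rw [abs_mul]
    exact mul_le_mul_of_nonneg_left h2 (abs_nonneg _)
  have h4 := (abs_le.1 h3).1
  have h5 : D.im ^ 2 * ‖w'‖ ^ 2 ≤ m ^ 2 * ‖w'‖ ^ 2 :=
    mul_le_mul_of_nonneg_right (sq_le_sq' (abs_le.1 hm).1 (abs_le.1 hm).2) (sq_nonneg _)
  have h6 := sq_nonneg (‖d * w‖ - 4 * |D.im| * ‖w'‖)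
  have h7 : |D.im| ^ 2 = D.im ^ 2 := sq_abs _
  rw [h1]
  have h8 : (‖d * w‖ - 4 * |D.im| * ‖w'‖) ^ 2 = ‖d * w‖ ^ 2
      - 8 * (|D.im| * (‖d * w‖ * ‖w'‖)) + 16 * (D.im ^ 2 * ‖w'‖ ^ 2) := by
    rw [← h7]; ring
  linarith

lemma deriv_mul_at {A B : ℂ → ℂ} (hA : Dec A) (hB : Dec B) {t : ℝ} (ht : 0 < t) (x : ℝ) :
    deriv (fun z => A z * B z) (pt x t)
      = deriv A (pt x t) * B (pt x t) + A (pt x t) * deriv B (pt x t) :=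
  ((hA.hasDerivAt (z := pt x t) (by simpa using ht)).mul
    (hB.hasDerivAt (z := pt x t) (by simpa using ht))).deriv

/-- A Carleson embedding for the measure `t |D'|²`, with `Im D` bounded: it follows from Green's
formula for the function `(Im D)² |W|²`. -/
lemma Dec.carleson {D W : ℂ → ℂ} (hD : Dec D) (hW : Dec W) {m : ℝ}
    (hm : ∀ z : ℂ, 0 < z.im → |(D z).im| ≤ m) {ε : ℝ} (hε : 0 < ε) :
    IntegrableOn (fun t => (t - ε) * energy (fun z => deriv D z * W z) t) (Ioi ε) ∧
    ∫ t in Ioi ε, (t - ε) * energy (fun z => deriv D z * W z) t ≤ 4 * m ^ 2 * energy W ε := by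
  have hDW := hD.mul hW
  have hDDW := (hD.mul hD).mul hW
  have hdW := hD.deriv_dec.mul hW
  obtain ⟨i1, e1⟩ := hW.square_function hε
  obtain ⟨i2, e2⟩ := hDW.square_function hε
  obtain ⟨i3, e3⟩ := hDDW.green hW hε
  set K : ℝ → ℂ := fun t => ∫ x, deriv (fun z => D z * D z * W z) (pt x t)
    * conj (deriv W (pt x t)) with hK
  change IntegrableOn (fun t : ℝ => ((t - ε : ℝ) : ℂ) * K t) (Ioi ε) at i3
  change 4 * ∫ t in Ioi ε, ((t - ε : ℝ) : ℂ) * K t = _ at e3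
  have hpt : ∀ t > 0, energy (fun z => deriv D z * W z) t ≤ 12 * m ^ 2 * energy (deriv W) t
      + (2 * energy (deriv fun z => D z * W z) t - 2 * (K t).re) := by
    intro t ht
    have j1 := (hW.deriv_dec.integrable_sq ht).const_mul (12 * m ^ 2)
    have j2 := (hDW.deriv_dec.integrable_sq ht).const_mul 2
    have j3 := ((hDDW.deriv_dec.integrable_mul_conj hW.deriv_dec ht).re).const_mul 2
    have j23 : Integrable (fun x => 2 * ‖deriv (fun z => D z * W z) (pt x t)‖ ^ 2
        - 2 * RCLike.re (deriv (fun z => D z * D z * W z) (pt x t)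
          * conj (deriv W (pt x t)))) := j2.sub j3
    have hKre : (K t).re = ∫ x, RCLike.re (deriv (fun z => D z * D z * W z) (pt x t)
        * conj (deriv W (pt x t))) :=
      (integral_re (hDDW.deriv_dec.integrable_mul_conj hW.deriv_dec ht)).symm
    rw [hKre]
    unfold energy
    rw [← integral_const_mul, ← integral_const_mul, ← integral_const_mul, ← integral_sub j2 j3,
      ← integral_add j1 j23]
    refine integral_mono (hdW.integrable_sq ht) (j1.add j23) fun x => ?_
    have := laplacian_lower_bound (D (pt x t)) (deriv D (pt x t)) (W (pt x t))
      (deriv W (pt x t)) (hm (pt x t) (by simpa using ht))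
    simp only [RCLike.re_to_complex]
    rw [deriv_mul_at hD hW ht, deriv_mul_at (hD.mul hD) hW ht, deriv_mul_at hD hD ht]
    refine this.trans (le_of_eq ?_)
    congr 5
    ring
  have i4 : IntegrableOn (fun t => (t - ε) * (K t).re) (Ioi ε) := by
    refine i3.re.congr (ae_of_all _ fun t => ?_)
    simp
  have e4 : 4 * ∫ t in Ioi ε, (t - ε) * (K t).re
      = ∫ x, ((D (pt x ε) * D (pt x ε) * W (pt x ε)) * conj (W (pt x ε))).re := by
    have h := congrArg Complex.re e3
    have r1 : (∫ x, (D (pt x ε) * D (pt x ε) * W (pt x ε)) * conj (W (pt x ε))).re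
        = ∫ x, ((D (pt x ε) * D (pt x ε) * W (pt x ε)) * conj (W (pt x ε))).re :=
      (integral_re (hDDW.integrable_mul_conj hW hε)).symm
    have r2 : (∫ t in Ioi ε, ((t - ε : ℝ) : ℂ) * K t).re
        = ∫ t in Ioi ε, (t - ε) * (K t).re := by
      refine (integral_re i3).symm.trans (integral_congr_ae (ae_of_all _ fun t => ?_))
      simp
    rw [r1] at h
    rw [← h, ← r2]
    simp
  have hrhs : IntegrableOn (fun t => 12 * m ^ 2 * ((t - ε) * energy (deriv W) t)
      + (2 * ((t - ε) * energy (deriv fun z => D z * W z) t) - 2 * ((t - ε) * (K t).re)))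
      (Ioi ε) := (i1.const_mul _).add ((i2.const_mul _).sub (i4.const_mul _))
  have hle : ∀ t ∈ Ioi ε, (t - ε) * energy (fun z => deriv D z * W z) t ≤
      12 * m ^ 2 * ((t - ε) * energy (deriv W) t)
      + (2 * ((t - ε) * energy (deriv fun z => D z * W z) t) - 2 * ((t - ε) * (K t).re)) := by
    intro t ht
    have ht : ε < t := ht
    refine (mul_le_mul_of_nonneg_left (hpt t (hε.trans ht)) (by linarith)).trans (le_of_eq ?_)
    ring
  have hint : IntegrableOn (fun t => (t - ε) * energy (fun z => deriv D z * W z) t) (Ioi ε) := by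
    refine Integrable.mono' hrhs ?_ ?_
    · refine ContinuousOn.aestronglyMeasurable ?_ measurableSet_Ioi
      refine ContinuousOn.mul (by fun_prop) fun t ht => ?_
      exact (hdW.continuousAt_energy (hε.trans ht)).continuousWithinAt
    · refine (ae_restrict_iff' measurableSet_Ioi).2 (ae_of_all _ fun t ht => ?_)
      rw [Real.norm_of_nonneg (mul_nonneg (by linarith [show ε < t from ht])
        (energy_nonneg _ _))]
      exact hle t ht
  refine ⟨hint, (setIntegral_mono_on hint hrhs measurableSet_Ioi hle).trans ?_⟩
  have i24 : IntegrableOn (fun t => 2 * ((t - ε) * energy (deriv fun z => D z * W z) t)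
      - 2 * ((t - ε) * (K t).re)) (Ioi ε) := (i2.const_mul _).sub (i4.const_mul _)
  rw [integral_add (i1.const_mul _) i24, integral_sub (i2.const_mul _) (i4.const_mul _),
    integral_const_mul, integral_const_mul, integral_const_mul]
  -- The boundary term is twice the integral of `(Im D)² |W|²`.
  have hbdry : energy (fun z => D z * W z) ε
      - ∫ x, ((D (pt x ε) * D (pt x ε) * W (pt x ε)) * conj (W (pt x ε))).re
      ≤ 2 * m ^ 2 * energy W ε := by
    simp only [energy]
    have k3 : Integrable (fun x => ((D (pt x ε) * D (pt x ε) * W (pt x ε))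
        * conj (W (pt x ε))).re) := (hDDW.integrable_mul_conj hW hε).re
    rw [← integral_const_mul, ← integral_sub (hDW.integrable_sq hε) k3]
    refine integral_mono ((hDW.integrable_sq hε).sub k3)
      ((hW.integrable_sq hε).const_mul _) fun x => ?_
    have h1 := sq_le_sq' (by linarith [abs_le.1 (hm (pt x ε) (by simpa using hε))])
      (abs_le.1 (hm (pt x ε) (by simpa using hε))).2
    have h2 := mul_le_mul_of_nonneg_right h1 (sq_nonneg ‖W (pt x ε)‖)
    refine (le_of_eq ?_).trans ((mul_le_mul_of_nonneg_left h2 zero_le_two).trans (le_of_eq ?_))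
    · simp only [← Complex.normSq_eq_norm_sq,
        Complex.normSq_apply, Complex.mul_re, Complex.mul_im, Complex.conj_re, Complex.conj_im]
      ring
    · ring
  nlinarith [e1, e2, e4, hbdry]

/-- The trilinear estimate behind the commutator bound. Green's formula and integration by parts
move derivatives until the integrand is `F' W conj G''`; the factor `F'` is controlled by the
square function of `F`, and `W G''` by the Carleson embedding. The parameter `l` is the weight in
the inequality between the arithmetic and geometric means. -/
lemma trilinear_bound {F W G : ℂ → ℂ} (hF : Dec F) (hW : Dec W) (hG : Dec G) {m : ℝ}
    (hm : ∀ z : ℂ, 0 < z.im → |(deriv G z).im| ≤ m) {ε l : ℝ} (hε : 0 < ε) (hl : 0 < l) :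
    ‖∫ x, (deriv F (pt x ε) * W (pt x ε)) * conj (G (pt x ε))‖
      ≤ l / 2 * energy F ε + 8 * m ^ 2 / l * energy W ε := by
  have hFW := hF.deriv_dec.mul hW
  have hGW := hG.deriv_dec.deriv_dec.mul hW
  obtain ⟨-, e⟩ := hFW.green hG hε
  obtain ⟨i1, e1⟩ := hF.square_function hε
  obtain ⟨i2, e2⟩ := hG.deriv_dec.carleson hW hm hε
  rw [← e, norm_mul, Complex.norm_ofNat]
  have hrhs : IntegrableOn (fun t => l / 2 * ((t - ε) * energy (deriv F) t)
      + 1 / (2 * l) * ((t - ε) * energy (fun z => deriv (deriv G) z * W z) t)) (Ioi ε) :=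
    (i1.const_mul _).add (i2.const_mul _)
  have key : ‖∫ t in Ioi ε, ((t - ε : ℝ) : ℂ) *
      ∫ x, deriv (fun z => deriv F z * W z) (pt x t) * conj (deriv G (pt x t))‖
      ≤ ∫ t in Ioi ε, (l / 2 * ((t - ε) * energy (deriv F) t)
      + 1 / (2 * l) * ((t - ε) * energy (fun z => deriv (deriv G) z * W z) t)) := by
    refine norm_integral_le_of_norm_le hrhs
      ((ae_restrict_iff' measurableSet_Ioi).2 (ae_of_all _ fun t ht => ?_))
    have htε : ε < t := ht
    have ht0 : 0 < t := hε.trans htε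
    have hparts := hFW.integral_parts hG.deriv_dec ht0
    rw [norm_mul, Complex.norm_real, Real.norm_of_nonneg (by linarith), ← norm_neg, ← hparts]
    have k1 := (hF.deriv_dec.integrable_sq ht0).const_mul (l / 2)
    have k2 := (hGW.integrable_sq ht0).const_mul (1 / (2 * l))
    have : ‖∫ x, (deriv F (pt x t) * W (pt x t)) * conj (deriv (deriv G) (pt x t))‖
        ≤ l / 2 * energy (deriv F) t
          + 1 / (2 * l) * energy (fun z => deriv (deriv G) z * W z) t := by
      unfold energy
      rw [← integral_const_mul, ← integral_const_mul, ← integral_add k1 k2]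
      refine norm_integral_le_of_norm_le (k1.add k2) (ae_of_all _ fun x => ?_)
      simp only [norm_mul, RCLike.norm_conj]
      set a := ‖deriv F (pt x t)‖
      set b := ‖W (pt x t)‖
      set c := ‖deriv (deriv G) (pt x t)‖
      have : l / 2 * a ^ 2 + 1 / (2 * l) * (c * b) ^ 2 - a * b * c
          = 1 / (2 * l) * (l * a - c * b) ^ 2 := by
        field_simp; ring
      have h0 : 0 ≤ 1 / (2 * l) * (l * a - c * b) ^ 2 := by positivity
      linarith
    refine (mul_le_mul_of_nonneg_left this (by linarith)).trans (le_of_eq ?_)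
    ring
  rw [integral_add (i1.const_mul _) (i2.const_mul _), integral_const_mul,
    integral_const_mul] at key
  have h3 := mul_le_mul_of_nonneg_left e2 (show 0 ≤ 1 / (2 * l) by positivity)
  refine (mul_le_mul_of_nonneg_left key (by norm_num : (0 : ℝ) ≤ 4)).trans ?_
  rw [← e1]
  have h4 : 8 * m ^ 2 / l * energy W ε = 4 * (1 / (2 * l) * (4 * m ^ 2 * energy W ε)) := by
    field_simp; ring
  rw [h4]
  linarith

/-! ### Cauchy integrals of compactly supported functions -/

/-- Bounded measurable functions vanishing outside a bounded interval. -/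
structure Nice (k : ℝ → ℝ) : Prop where
  meas : Measurable k
  bdd : ∃ B, 0 ≤ B ∧ ∀ x, |k x| ≤ B
  supp : ∃ R, 0 < R ∧ ∀ x, R < |x| → k x = 0

lemma Nice.integrable {k : ℝ → ℝ} (hk : Nice k) : Integrable k := by
  obtain ⟨B, -, hB⟩ := hk.bdd
  obtain ⟨R, -, hR⟩ := hk.supp
  have hs : Function.support k ⊆ Icc (-R) R := by
    intro x hx
    by_contra h
    exact hx (hR x (by rwa [mem_Icc, ← abs_le, not_le] at h))
  rw [← integrableOn_iff_integrable_of_support_subset hs]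
  exact Measure.integrableOn_of_bounded (M := B) (by simp)
    hk.meas.aestronglyMeasurable (ae_of_all _ hB)

lemma Nice.sq {k : ℝ → ℝ} (hk : Nice k) : Nice (fun x => k x ^ 2) := by
  obtain ⟨B, hB0, hB⟩ := hk.bdd
  obtain ⟨R, hR0, hR⟩ := hk.supp
  refine ⟨hk.meas.pow_const 2, ⟨B ^ 2, by positivity, fun x => ?_⟩, ⟨R, hR0, fun x hx => ?_⟩⟩
  · rw [abs_pow]
    exact pow_le_pow_left₀ (abs_nonneg _) (hB x) 2
  · simp [hR x hx]

/-- The Cauchy integral `∫ k(s) / (s - z) ds`. -/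
noncomputable def cauchy (k : ℝ → ℝ) (z : ℂ) : ℂ := ∫ s : ℝ, (k s : ℂ) * ((s : ℂ) - z)⁻¹

lemma im_le_norm_sub (s : ℝ) (z : ℂ) : z.im ≤ ‖(s : ℂ) - z‖ := by
  have := Complex.abs_im_le_norm ((s : ℂ) - z)
  simp only [Complex.sub_im, Complex.ofReal_im, zero_sub, abs_neg] at this
  exact (le_abs_self _).trans this

lemma sub_ne_zero_of_im {z : ℂ} (hz : 0 < z.im) (s : ℝ) : (s : ℂ) - z ≠ 0 :=
  norm_pos_iff.1 (hz.trans_le (im_le_norm_sub s z))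

lemma norm_inv_sub_le {z : ℂ} (hz : 0 < z.im) (s : ℝ) : ‖((s : ℂ) - z)⁻¹‖ ≤ z.im⁻¹ := by
  rw [norm_inv]
  exact inv_anti₀ hz (im_le_norm_sub s z)

lemma continuous_inv_sub {z : ℂ} (hz : 0 < z.im) :
    Continuous (fun s : ℝ => ((s : ℂ) - z)⁻¹) :=
  Continuous.inv₀ (by fun_prop) (sub_ne_zero_of_im hz)

lemma Nice.integrable_mul_inv {k : ℝ → ℝ} (hk : Nice k) {z : ℂ} (hz : 0 < z.im) :
    Integrable (fun s : ℝ => (k s : ℂ) * ((s : ℂ) - z)⁻¹) :=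
  hk.integrable.ofReal.mul_bdd (continuous_inv_sub hz).aestronglyMeasurable
    (ae_of_all _ (norm_inv_sub_le hz))

lemma Nice.hasDerivAt_cauchy {k : ℝ → ℝ} (hk : Nice k) {z : ℂ} (hz : 0 < z.im) :
    Integrable (fun s : ℝ => (k s : ℂ) * (((s : ℂ) - z) ^ 2)⁻¹) ∧
    HasDerivAt (cauchy k) (∫ s : ℝ, (k s : ℂ) * (((s : ℂ) - z) ^ 2)⁻¹) z := by
  have hopen : {w : ℂ | z.im / 2 < w.im} ∈ 𝓝 z :=
    (isOpen_lt continuous_const Complex.continuous_im).mem_nhds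
      (show z.im / 2 < z.im by linarith)
  refine hasDerivAt_integral_of_dominated_loc_of_deriv_le
    (F := fun z (s : ℝ) => (k s : ℂ) * ((s : ℂ) - z)⁻¹)
    (F' := fun z (s : ℝ) => (k s : ℂ) * (((s : ℂ) - z) ^ 2)⁻¹)
    (bound := fun s => |k s| * ((z.im / 2)⁻¹ ^ 2)) hopen ?_ ?_ ?_ ?_ ?_ ?_
  · filter_upwards [hopen] with w hw
    exact (hk.integrable_mul_inv (lt_trans (by positivity) hw)).aestronglyMeasurable
  · exact hk.integrable_mul_inv hz
  · refine hk.integrable.ofReal.aestronglyMeasurable.mul (Continuous.aestronglyMeasurable ?_)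
    exact Continuous.inv₀ (by fun_prop) fun s => pow_ne_zero 2 (sub_ne_zero_of_im hz s)
  · refine ae_of_all _ fun s w hw => ?_
    have hw : z.im / 2 < w.im := hw
    have hw0 : 0 < w.im := lt_trans (by positivity) hw
    rw [norm_mul, Complex.norm_real, ← inv_pow, norm_pow, Real.norm_eq_abs]
    gcongr
    exact (norm_inv_sub_le hw0 s).trans (inv_anti₀ (by positivity) hw.le)
  · exact hk.integrable.abs.mul_const _
  · refine ae_of_all _ fun s w hw => ?_
    have hw0 : 0 < w.im := lt_trans (by positivity) (show z.im / 2 < w.im from hw)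
    have h1 : HasDerivAt (fun w : ℂ => (s : ℂ) - w) (-1) w := by
      simpa using (hasDerivAt_id w).const_sub (s : ℂ)
    have := (h1.inv (sub_ne_zero_of_im hw0 s)).const_mul (k s : ℂ)
    refine this.congr_deriv ?_
    simp [div_eq_mul_inv]

lemma Nice.dec {k : ℝ → ℝ} (hk : Nice k) : Dec (cauchy k) := by
  refine ⟨fun z hz => (hk.hasDerivAt_cauchy hz).2.differentiableAt.differentiableWithinAt,
    fun ε hε => ?_⟩
  obtain ⟨R, hR0, hR⟩ := hk.supp
  refine ⟨(∫ s, |k s|) * (1 + R / ε), mul_nonneg (integral_nonneg fun _ => abs_nonneg _)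
    (by positivity), fun z hz => ?_⟩
  have hz0 : 0 < ‖z‖ := hε.trans_le (norm_ge_of_im hz)
  rw [mul_div_assoc, ← integral_mul_const]
  refine norm_integral_le_of_norm_le (hk.integrable.abs.mul_const _) (ae_of_all _ fun s => ?_)
  rw [norm_mul, Complex.norm_real, Real.norm_eq_abs]
  by_cases hs : R < |s|
  · simp [hR s hs]
  refine mul_le_mul_of_nonneg_left ?_ (abs_nonneg _)
  have h1 : ε ≤ ‖(s : ℂ) - z‖ := hz.trans (im_le_norm_sub s z)
  have h2 : ‖z‖ ≤ ‖(s : ℂ) - z‖ + R := by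
    have := norm_sub_norm_le z (s : ℂ)
    rw [norm_sub_rev, Complex.norm_real, Real.norm_eq_abs] at this
    linarith
  have h3 : R ≤ R / ε * ‖(s : ℂ) - z‖ := by
    rw [div_mul_eq_mul_div, le_div_iff₀ hε]
    exact mul_le_mul_of_nonneg_left h1 hR0.le
  rw [norm_inv, inv_eq_one_div, div_le_div_iff₀ (hε.trans_le h1) hz0]
  linarith

/-- For smooth densities, differentiation commutes with the Cauchy integral. -/
lemma deriv_cauchy {f : ℝ → ℝ} (hf : Nice f) (hf' : Nice (deriv f)) (hd : Differentiable ℝ f)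
    {z : ℂ} (hz : 0 < z.im) : deriv (cauchy f) z = cauchy (deriv f) z := by
  obtain ⟨i2, h2⟩ := hf.hasDerivAt_cauchy hz
  have i1 := hf'.integrable_mul_inv hz
  rw [h2.deriv]
  have : ∫ s : ℝ, (((deriv f s : ℝ) : ℂ) * ((s : ℂ) - z)⁻¹ - (f s : ℂ) * (((s : ℂ) - z) ^ 2)⁻¹) = 0 := by
    refine integral_eq_zero_of_hasDerivAt_of_integrable
      (f := fun s : ℝ => (f s : ℂ) * ((s : ℂ) - z)⁻¹) (fun s => ?_) (i1.sub i2)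
      (hf.integrable_mul_inv hz)
    have h1 : HasDerivAt (fun s : ℝ => (s : ℂ) - z) 1 s :=
      (Complex.ofRealCLM.hasDerivAt (x := s)).sub_const z
    refine ((hd s).hasDerivAt.ofReal_comp.mul (h1.inv (sub_ne_zero_of_im hz s))).congr_deriv ?_
    simp [div_eq_mul_inv, sub_eq_add_neg]
  rw [integral_sub i1 i2, sub_eq_zero] at this
  exact this.symm

/-! ### Poisson integrals -/

/-- `π` times the Poisson integral of `u`. -/
noncomputable def pconv (u : ℝ → ℝ) (t x : ℝ) : ℝ := ∫ s, u s * poi t (x - s)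

lemma im_inv_sub (s x t : ℝ) : (((s : ℂ) - pt x t)⁻¹).im = poi t (x - s) := by
  rw [Complex.inv_im, Complex.normSq_apply]
  simp only [Complex.sub_re, Complex.sub_im, pt_re, pt_im, Complex.ofReal_re, Complex.ofReal_im]
  unfold poi
  congr 1 <;> ring

lemma Nice.im_cauchy {k : ℝ → ℝ} (hk : Nice k) {t : ℝ} (ht : 0 < t) (x : ℝ) :
    (cauchy k (pt x t)).im = pconv k t x := by
  unfold cauchy pconv
  have h := integral_im (hk.integrable_mul_inv (z := pt x t) (by simpa using ht))
  refine h.symm.trans (integral_congr_ae (ae_of_all _ fun s => ?_))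
  simp only [RCLike.im_to_complex, Complex.im_ofReal_mul, im_inv_sub]

lemma integrable_pconv {u : ℝ → ℝ} (hu : Integrable u) {t : ℝ} (ht : 0 < t) :
    Integrable (pconv u t) :=
  hu.integrable_convolution (ContinuousLinearMap.mul ℝ ℝ) (integrable_poi ht)

lemma integral_pconv {u : ℝ → ℝ} (hu : Integrable u) {t : ℝ} (ht : 0 < t) :
    ∫ x, pconv u t x = (∫ x, u x) * Real.pi := by
  rw [← integral_poi ht]
  exact integral_convolution (ContinuousLinearMap.mul ℝ ℝ) hu (integrable_poi ht)

lemma integrable_poi_sub {t : ℝ} (ht : 0 < t) (x : ℝ) : Integrable (fun s => poi t (x - s)) :=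
  (integrable_poi ht).comp_sub_left x

lemma integral_poi_sub {t : ℝ} (ht : 0 < t) (x : ℝ) : ∫ s, poi t (x - s) = Real.pi := by
  rw [integral_sub_left_eq_self (poi t) volume x, integral_poi ht]

lemma integrable_mul_poi {u : ℝ → ℝ} (hu : Measurable u) {B : ℝ} (hB : ∀ x, |u x| ≤ B)
    {t : ℝ} (ht : 0 < t) (x : ℝ) : Integrable (fun s => u s * poi t (x - s)) :=
  (integrable_poi_sub ht x).bdd_mul hu.aestronglyMeasurable (ae_of_all _ hB)

lemma pconv_eq (u : ℝ → ℝ) (t x : ℝ) : pconv u t x = ∫ y, u (x - y) * poi t y := by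
  unfold pconv
  rw [← integral_sub_left_eq_self _ volume x]
  simp

/-- Jensen's inequality for the Poisson integral. -/
lemma Nice.pconv_sq_le {k : ℝ → ℝ} (hk : Nice k) {t : ℝ} (ht : 0 < t) (x : ℝ) :
    pconv k t x ^ 2 ≤ Real.pi * pconv (fun s => k s ^ 2) t x := by
  obtain ⟨B, -, hB⟩ := hk.bdd
  obtain ⟨B2, -, hB2⟩ := hk.sq.bdd
  have i1 := integrable_mul_poi hk.meas hB ht x
  have i2 := integrable_mul_poi hk.sq.meas hB2 ht x
  have i0 := integrable_poi_sub ht x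
  set c := pconv k t x with hc
  have h : 0 ≤ ∫ s, (k s ^ 2 * poi t (x - s) - 2 * (c / Real.pi) * (k s * poi t (x - s))
      + (c / Real.pi) ^ 2 * poi t (x - s)) := by
    refine integral_nonneg fun s => ?_
    have : 0 ≤ (k s - c / Real.pi) ^ 2 * poi t (x - s) :=
      mul_nonneg (sq_nonneg _) (poi_nonneg ht _)
    refine this.trans (le_of_eq ?_)
    ring
  have i3 : Integrable (fun s => k s ^ 2 * poi t (x - s)
      - 2 * (c / Real.pi) * (k s * poi t (x - s))) := i2.sub (i1.const_mul _)
  rw [integral_add i3 (i0.const_mul _), integral_sub i2 (i1.const_mul _), integral_const_mul,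
    integral_const_mul, integral_poi_sub ht] at h
  change 0 ≤ pconv (fun s => k s ^ 2) t x - 2 * (c / Real.pi) * c + (c / Real.pi) ^ 2 * Real.pi at h
  have hpi := Real.pi_pos
  have h2 : pconv (fun s => k s ^ 2) t x - 2 * (c / Real.pi) * c + (c / Real.pi) ^ 2 * Real.pi
      = (Real.pi * pconv (fun s => k s ^ 2) t x - c ^ 2) / Real.pi := by
    field_simp; ring
  rw [h2, le_div_iff₀ hpi] at h
  linarith

/-- The Cauchy integral is bounded on `L²`, uniformly over horizontal lines: as the integral of
its square vanishes, its real and imaginary parts have the same `L²` norm. -/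
lemma Nice.energy_cauchy_le {k : ℝ → ℝ} (hk : Nice k) {t : ℝ} (ht : 0 < t) :
    energy (cauchy k) t ≤ 2 * Real.pi ^ 2 * ∫ s, k s ^ 2 := by
  have hd := hk.dec
  have hz : ∫ x, (cauchy k (pt x t) * cauchy k (pt x t)).re = 0 := by
    have h := congrArg Complex.re (hd.integral_mul_eq_zero hd ht)
    exact (integral_re (hd.integrable_mul hd ht)).trans h
  have i1 : Integrable (fun x => (cauchy k (pt x t) * cauchy k (pt x t)).re) :=
    (hd.integrable_mul hd ht).re
  have i2 := (integrable_pconv hk.sq.integrable ht).const_mul (2 * Real.pi)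
  calc energy (cauchy k) t ≤ ∫ x, ((cauchy k (pt x t) * cauchy k (pt x t)).re
        + 2 * Real.pi * pconv (fun s => k s ^ 2) t x) := by
        refine integral_mono (hd.integrable_sq ht) (i1.add i2) fun x => ?_
        have h1 := hk.pconv_sq_le ht x
        rw [← hk.im_cauchy ht] at h1
        simp only [← Complex.normSq_eq_norm_sq, Complex.normSq_apply, Complex.mul_re]
        linarith
    _ = 2 * Real.pi ^ 2 * ∫ s, k s ^ 2 := by
        rw [integral_add i1 i2, hz, integral_const_mul, integral_pconv hk.sq.integrable ht]
        ring

lemma lip_pconv {u : ℝ → ℝ} (hu : Measurable u) {B M : ℝ} (hB : ∀ x, |u x| ≤ B)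
    (hM : ∀ x y, |u x - u y| ≤ M * |x - y|) {t : ℝ} (ht : 0 < t) (x y : ℝ) :
    |pconv u t x - pconv u t y| ≤ Real.pi * M * |x - y| := by
  have i : ∀ x, Integrable (fun s => u (x - s) * poi t s) := fun x =>
    (integrable_poi ht).bdd_mul (hu.comp (measurable_const.sub measurable_id)).aestronglyMeasurable
      (ae_of_all _ fun s => hB _)
  rw [pconv_eq, pconv_eq, ← integral_sub (i x) (i y), ← integral_poi ht, mul_assoc,
    ← integral_mul_const, ← Real.norm_eq_abs]
  refine norm_integral_le_of_norm_le ((integrable_poi ht).mul_const _) (ae_of_all _ fun s => ?_)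
  rw [← sub_mul, norm_mul, mul_comm, Real.norm_of_nonneg (poi_nonneg ht s)]
  refine mul_le_mul_of_nonneg_left ?_ (poi_nonneg ht s)
  simpa using hM (x - s) (y - s)

lemma abs_pconv_le {u : ℝ → ℝ} {B : ℝ} (hB : ∀ x, |u x| ≤ B)
    {t : ℝ} (ht : 0 < t) (x : ℝ) : |pconv u t x| ≤ Real.pi * B := by
  rw [← integral_poi_sub ht x, ← integral_mul_const, ← Real.norm_eq_abs]
  refine norm_integral_le_of_norm_le ((integrable_poi_sub ht x).mul_const _)
    (ae_of_all _ fun s => ?_)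
  rw [norm_mul, mul_comm, Real.norm_of_nonneg (poi_nonneg ht _)]
  exact mul_le_mul_of_nonneg_left (hB s) (poi_nonneg ht _)

lemma continuous_of_lip {u : ℝ → ℝ} {M : ℝ} (hM : ∀ x y, |u x - u y| ≤ M * |x - y|) :
    Continuous u :=
  (LipschitzWith.of_dist_le' (K := M) fun x y => by simpa [Real.dist_eq] using hM x y).continuous

/-- The harmonic extension of the derivative of an `M`-Lipschitz function is bounded by `M`
(up to the normalising factor `π`). -/
lemma Nice.im_deriv_cauchy_le {k : ℝ → ℝ} (hk : Nice k) {M : ℝ}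
    (hM : ∀ x y, |k x - k y| ≤ M * |x - y|) {z : ℂ} (hz : 0 < z.im) :
    |(deriv (cauchy k) z).im| ≤ Real.pi * M := by
  obtain ⟨B, -, hB⟩ := hk.bdd
  have hzpt : pt z.re z.im = z := Complex.re_add_im z
  have h := Complex.imCLM.hasFDerivAt.comp_hasDerivAt z.re (hk.dec.hasDerivAt_left hz z.re)
  rw [hzpt] at h
  have h' : HasDerivAt (fun x => pconv k z.im x) (deriv (cauchy k) z).im z.re := by
    refine h.congr_of_eventuallyEq (Eventually.of_forall fun x => ?_)
    exact (hk.im_cauchy hz x).symm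
  have hM0 : 0 ≤ M := by
    have := (abs_nonneg _).trans (hM 1 0)
    simpa using this
  refine h'.le_of_lip' (C := Real.pi * M) (by positivity) (Eventually.of_forall fun x => ?_)
  exact lip_pconv hk.meas hB hM hz x z.re

/-! ### The bilinear form of the commutator -/

lemma norm_inv_sub_sq (s x : ℝ) {t : ℝ} (ht : 0 < t) :
    ‖((s : ℂ) - pt x t)⁻¹‖ ^ 2 = t⁻¹ * poi t (x - s) := by
  rw [norm_inv, inv_pow, ← Complex.normSq_eq_norm_sq, Complex.normSq_apply]
  simp only [Complex.sub_re, Complex.sub_im, pt_re, pt_im, Complex.ofReal_re, Complex.ofReal_im]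
  unfold poi
  rw [show (s - x) * (s - x) + (0 - t) * (0 - t) = (x - s) ^ 2 + t ^ 2 by ring]
  field_simp

/-- Partial fractions for the imaginary part of a product of two Cauchy kernels. -/
lemma im_mul_inv_sub {s r : ℝ} (hsr : s ≠ r) (x : ℝ) {t : ℝ} (ht : 0 < t) :
    (((s : ℂ) - pt x t)⁻¹ * ((r : ℂ) - pt x t)⁻¹).im
      = (poi t (x - s) - poi t (x - r)) / (r - s) := by
  have h1 := sub_ne_zero_of_im (z := pt x t) (by simpa using ht) s
  have h2 := sub_ne_zero_of_im (z := pt x t) (by simpa using ht) r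
  have h3 : (r : ℂ) - s ≠ 0 := by
    rw [sub_ne_zero]; exact_mod_cast hsr.symm
  have : ((s : ℂ) - pt x t)⁻¹ * ((r : ℂ) - pt x t)⁻¹
      = (((s : ℂ) - pt x t)⁻¹ - ((r : ℂ) - pt x t)⁻¹) / ((r - s : ℝ) : ℂ) := by
    push_cast
    field_simp
    ring
  rw [this, Complex.div_ofReal_im, Complex.sub_im, im_inv_sub, im_inv_sub]

lemma abs_im_mul_inv_sub_le (s r x : ℝ) {t : ℝ} (ht : 0 < t) :
    |(((s : ℂ) - pt x t)⁻¹ * ((r : ℂ) - pt x t)⁻¹).im|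
      ≤ t⁻¹ * (poi t (x - s) + poi t (x - r)) := by
  refine (Complex.abs_im_le_norm _).trans ?_
  rw [norm_mul, mul_add, ← norm_inv_sub_sq s x ht, ← norm_inv_sub_sq r x ht]
  nlinarith [sq_nonneg (‖((s : ℂ) - pt x t)⁻¹‖ - ‖((r : ℂ) - pt x t)⁻¹‖),
    sq_nonneg ‖((s : ℂ) - pt x t)⁻¹‖, sq_nonneg ‖((r : ℂ) - pt x t)⁻¹‖]

lemma ae_fst_ne_snd : ∀ᵐ p : ℝ × ℝ ∂((volume : Measure ℝ).prod volume), p.1 ≠ p.2 := by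
  rw [ae_iff]
  have hm : MeasurableSet {p : ℝ × ℝ | ¬ p.1 ≠ p.2} := by
    simpa using measurableSet_eq_fun measurable_fst measurable_snd
  rw [Measure.measure_prod_null hm]
  refine ae_of_all _ fun x => ?_
  have : Prod.mk x ⁻¹' {p : ℝ × ℝ | ¬ p.1 ≠ p.2} = {x} := by
    ext y; simp [eq_comm]
  change volume (Prod.mk x ⁻¹' _) = 0
  rw [this]
  simp

lemma Nice.integrable_prod {a h : ℝ → ℝ} (ha : Nice a) (hh : Nice h) :
    Integrable (fun p : ℝ × ℝ => a p.1 * h p.2) ((volume : Measure ℝ).prod volume) :=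
  ha.integrable.mul_prod hh.integrable

/-- The imaginary part of a product of Cauchy integrals as a double integral. -/
lemma Nice.im_cauchy_mul {a h : ℝ → ℝ} (ha : Nice a) (hh : Nice h) {t : ℝ} (ht : 0 < t) (x : ℝ) :
    (cauchy a (pt x t) * cauchy h (pt x t)).im = ∫ p : ℝ × ℝ, a p.1 * h p.2 *
      (((p.1 : ℂ) - pt x t)⁻¹ * ((p.2 : ℂ) - pt x t)⁻¹).im
        ∂((volume : Measure ℝ).prod volume) := by
  have hz : 0 < (pt x t).im := by simpa using ht
  have i := (ha.integrable_mul_inv hz).mul_prod (hh.integrable_mul_inv hz)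
  unfold cauchy
  rw [← integral_prod_mul]
  refine (integral_im i).symm.trans (integral_congr_ae (ae_of_all _ fun p => ?_))
  change Complex.im _ = a p.1 * h p.2 * Complex.im _
  rw [← Complex.im_ofReal_mul]
  push_cast
  ring_nf

lemma measurable_im_kernel (t : ℝ) : Measurable (fun q : ℝ × ℝ × ℝ =>
    (((q.2.1 : ℂ) - pt q.1 t)⁻¹ * ((q.2.2 : ℂ) - pt q.1 t)⁻¹).im) := by
  unfold pt
  fun_prop

/-- The trilinear integral of two Cauchy integrals against a bounded function `u` is the bilinear
form whose kernel is the difference quotient of the Poisson integral of `u`. -/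
lemma bilinear_identity {a h u : ℝ → ℝ} (ha : Nice a) (hh : Nice h) (hu : Measurable u) {B : ℝ}
    (hB : ∀ x, |u x| ≤ B) {t : ℝ} (ht : 0 < t) :
    ∫ x, u x * (cauchy a (pt x t) * cauchy h (pt x t)).im
      = - ∫ p : ℝ × ℝ, a p.1 * h p.2 * ((pconv u t p.1 - pconv u t p.2) / (p.1 - p.2))
        ∂((volume : Measure ℝ).prod volume) := by
  have hB0 : 0 ≤ B := (abs_nonneg _).trans (hB 0)
  set K : ℝ → ℝ × ℝ → ℝ := fun x p => u x * (a p.1 * h p.2 *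
      (((p.1 : ℂ) - pt x t)⁻¹ * ((p.2 : ℂ) - pt x t)⁻¹).im) with hK
  have hmK : Measurable (Function.uncurry K) := by
    have h1 := measurable_im_kernel t
    have h2 : Measurable (fun q : ℝ × ℝ × ℝ => u q.1) := hu.comp measurable_fst
    have h3 : Measurable (fun q : ℝ × ℝ × ℝ => a q.2.1) :=
      ha.meas.comp (measurable_fst.comp measurable_snd)
    have h4 : Measurable (fun q : ℝ × ℝ × ℝ => h q.2.2) :=
      hh.meas.comp (measurable_snd.comp measurable_snd)
    exact h2.mul ((h3.mul h4).mul h1)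
  have hp : ∀ s : ℝ, Integrable (fun x => poi t (x - s)) ∧ ∫ x, poi t (x - s) = Real.pi := by
    intro s
    refine ⟨(integrable_poi ht).comp_sub_right s, ?_⟩
    rw [integral_sub_right_eq_self (poi t) s, integral_poi ht]
  set b : ℝ × ℝ → ℝ → ℝ := fun p x =>
    B * |a p.1 * h p.2| * t⁻¹ * (poi t (x - p.1) + poi t (x - p.2)) with hb
  have ib : ∀ p, Integrable (b p) := fun p => ((hp p.1).1.add (hp p.2).1).const_mul _
  -- The bound `b` makes the triple integral absolutely convergent, as Fubini's theorem requires.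
  have hKb : ∀ p x, ‖K x p‖ ≤ b p x := by
    intro p x
    rw [hK, hb, Real.norm_eq_abs, abs_mul, abs_mul]
    calc |u x| * (|a p.1 * h p.2| * _)
        ≤ B * (|a p.1 * h p.2| * (t⁻¹ * (poi t (x - p.1) + poi t (x - p.2)))) := by
          gcongr
          · exact hB x
          · exact abs_im_mul_inv_sub_le _ _ _ ht
      _ = _ := by ring
  have iK : ∀ p, Integrable (fun x => K x p) := fun p =>
    (ib p).mono' (hmK.comp measurable_prodMk_right).aestronglyMeasurable (ae_of_all _ (hKb p))
  have hint : Integrable (Function.uncurry K)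
      ((volume : Measure ℝ).prod ((volume : Measure ℝ).prod volume)) := by
    rw [integrable_prod_iff' hmK.aestronglyMeasurable]
    refine ⟨ae_of_all _ iK, ?_⟩
    refine Integrable.mono' (((ha.integrable_prod hh).norm.const_mul (B * t⁻¹ * (2 * Real.pi))))
      hmK.stronglyMeasurable.norm.integral_prod_left'.aestronglyMeasurable (ae_of_all _ fun p => ?_)
    rw [Real.norm_of_nonneg (integral_nonneg fun _ => norm_nonneg _)]
    refine (integral_mono (iK p).norm (ib p) (hKb p)).trans (le_of_eq ?_)
    simp only [hb]
    rw [integral_const_mul, integral_add (hp p.1).1 (hp p.2).1, (hp p.1).2, (hp p.2).2,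
      Real.norm_eq_abs]
    ring
  calc ∫ x, u x * (cauchy a (pt x t) * cauchy h (pt x t)).im
      = ∫ x, ∫ p : ℝ × ℝ, K x p ∂((volume : Measure ℝ).prod volume) := by
        refine integral_congr_ae (ae_of_all _ fun x => ?_)
        simp only [hK]
        rw [ha.im_cauchy_mul hh ht, integral_const_mul]
    _ = ∫ p : ℝ × ℝ, (∫ x, K x p) ∂((volume : Measure ℝ).prod volume) :=
        integral_integral_swap hint
    _ = _ := by
        rw [← integral_neg]
        refine integral_congr_ae ?_
        filter_upwards [ae_fst_ne_snd] with p hne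
        have hu' : ∀ s, Integrable (fun x => u x * poi t (x - s)) ∧
            ∫ x, u x * poi t (x - s) = pconv u t s := by
          intro s
          simp_rw [poi_even t _ s]
          exact ⟨integrable_mul_poi hu hB ht s, rfl⟩
        have : ∀ x, K x p = a p.1 * h p.2 / (p.2 - p.1) *
            (u x * poi t (x - p.1) - u x * poi t (x - p.2)) := by
          intro x
          simp only [hK]
          rw [im_mul_inv_sub hne x ht]
          ring
        simp_rw [this]
        rw [integral_const_mul, integral_sub (hu' _).1 (hu' _).1, (hu' _).2, (hu' _).2,
          ← neg_sub p.1 p.2, div_neg, div_eq_mul_inv, div_eq_mul_inv]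
        ring

/-- Poisson integrals of an equi-Lipschitz bounded family converge along with the family. -/
lemma tendsto_pconv {u : ℝ → ℝ → ℝ} {B M L x : ℝ} (hB : ∀ t > 0, ∀ x, |u t x| ≤ B)
    (hM : ∀ t > 0, ∀ x y, |u t x - u t y| ≤ M * |x - y|)
    (hL : Tendsto (fun t => u t x) (𝓝[>] 0) (𝓝 L)) :
    Tendsto (fun t => pconv (u t) t x) (𝓝[>] 0) (𝓝 (Real.pi * L)) := by
  -- Rescaling fixes the kernel and moves the dependence on `t` into the argument of `u t`.
  have hscale : ∀ t > 0, pconv (u t) t x = ∫ y, u t (x - t * y) * poi 1 y := by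
    intro t ht
    have h := Measure.integral_comp_mul_left (fun y => u t (x - y) * poi t y) t
    rw [← pconv_eq, abs_of_pos (inv_pos.2 ht), smul_eq_mul] at h
    rw [← mul_inv_cancel_left₀ (ne_of_gt ht) (pconv (u t) t x), ← h, ← integral_const_mul]
    refine integral_congr_ae (ae_of_all _ fun y => ?_)
    simp only [poi]
    field_simp
  have hpos : ∀ᶠ t : ℝ in 𝓝[>] 0, 0 < t := eventually_mem_nhdsWithin
  refine Tendsto.congr' (f₁ := fun t => ∫ y, u t (x - t * y) * poi 1 y)
    (hpos.mono fun t ht => (hscale t ht).symm) ?_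
  rw [← integral_poi one_pos, ← integral_mul_const]
  refine tendsto_integral_filter_of_dominated_convergence (fun y => B * poi 1 y) ?_ ?_
    ((integrable_poi one_pos).const_mul B) (ae_of_all _ fun y => ?_)
  · filter_upwards [hpos] with t ht
    have := continuous_of_lip (hM t ht)
    exact ((this.comp (by fun_prop)).mul (continuous_poi one_pos)).aestronglyMeasurable
  · filter_upwards [hpos] with t ht
    refine ae_of_all _ fun y => ?_
    rw [norm_mul, Real.norm_of_nonneg (poi_nonneg one_pos y)]
    exact mul_le_mul_of_nonneg_right (hB t ht _) (poi_nonneg one_pos y)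
  · rw [mul_comm]
    refine Tendsto.mul_const _ ?_
    have h0 : Tendsto (fun t : ℝ => M * (|t| * |y|)) (𝓝[>] 0) (𝓝 0) := by
      have : Continuous (fun t : ℝ => M * (|t| * |y|)) := by fun_prop
      have := this.tendsto 0
      simp only [abs_zero, zero_mul, mul_zero] at this
      exact this.mono_left nhdsWithin_le_nhds
    have h1 : Tendsto (fun t : ℝ => u t (x - t * y) - u t x) (𝓝[>] 0) (𝓝 0) := by
      refine squeeze_zero_norm' (hpos.mono fun t ht => ?_) h0
      have := hM t ht (x - t * y) x
      rwa [show x - t * y - x = -(t * y) by ring, abs_neg, abs_mul] at this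
    simpa using h1.add hL

/-- The bilinear estimate at positive height: by Cauchy's theorem the real harmonic function
`Im G` may be replaced by the antiholomorphic `conj G`. -/
lemma bilinear_height {f h g : ℝ → ℝ} (hf : Nice f) (hf' : Nice (deriv f))
    (hd : Differentiable ℝ f) (hh : Nice h) (hg : Nice g) {M : ℝ}
    (hM : ∀ x y, |g x - g y| ≤ M * |x - y|) {l : ℝ} (hl : 0 < l) {t : ℝ} (ht : 0 < t) :
    |∫ p : ℝ × ℝ, deriv f p.1 * h p.2 *
        ((pconv (pconv g t) t p.1 - pconv (pconv g t) t p.2) / (p.1 - p.2))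
        ∂((volume : Measure ℝ).prod volume)|
      ≤ Real.pi ^ 2 * (l / 2 * (∫ x, f x ^ 2) + 8 * Real.pi ^ 2 * M ^ 2 / l * ∫ x, h x ^ 2) := by
  obtain ⟨B, hB0, hB⟩ := hg.bdd
  have hlip := lip_pconv hg.meas hB hM ht
  have hbd := bilinear_identity hf' hh (continuous_of_lip hlip).measurable
    (fun x => abs_pconv_le hB ht x) ht
  rw [← abs_neg, ← hbd]
  set A := cauchy (deriv f) with hA
  set W := cauchy h with hW
  set G := cauchy g with hG
  have dA : Dec A := hf'.dec
  have dW : Dec W := hh.dec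
  have dG : Dec G := hg.dec
  -- The holomorphic half of `Im G = (G - conj G) / 2i` contributes nothing.
  have hz : ∫ x, A (pt x t) * W (pt x t) * G (pt x t) = 0 :=
    (dA.mul dW).integral_mul_eq_zero dG ht
  set X := ∫ x, A (pt x t) * W (pt x t) * conj (G (pt x t)) with hX
  have i1 : Integrable (fun x => A (pt x t) * W (pt x t) * G (pt x t)) :=
    (dA.mul dW).integrable_mul dG ht
  have i2 : Integrable (fun x => A (pt x t) * W (pt x t) * conj (G (pt x t))) :=
    (dA.mul dW).integrable_mul_conj dG ht
  have hXle : ‖X‖ ≤ l / 2 * energy (cauchy f) t + 8 * (Real.pi * M) ^ 2 / l * energy W t := by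
    have := trilinear_bound hf.dec dW dG (m := Real.pi * M)
      (fun z hz => hg.im_deriv_cauchy_le hM hz) ht hl
    have e : ∀ x, deriv (cauchy f) (pt x t) = A (pt x t) := fun x =>
      deriv_cauchy hf hf' hd (by simpa using ht)
    simpa only [e] using this
  have hI : ∫ x, pconv g t x * (A (pt x t) * W (pt x t)).im
      = (∫ x, (2 * Complex.I)⁻¹ * (A (pt x t) * W (pt x t) * G (pt x t)
          - A (pt x t) * W (pt x t) * conj (G (pt x t)))).im := by
    refine Eq.trans ?_ (integral_im ((i1.sub i2).const_mul (2 * Complex.I)⁻¹))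
    refine integral_congr_ae (ae_of_all _ fun x => ?_)
    change pconv g t x * (A (pt x t) * W (pt x t)).im = Complex.im ((2 * Complex.I)⁻¹ * (A (pt x t) * W (pt x t) * G (pt x t)
      - A (pt x t) * W (pt x t) * conj (G (pt x t))))
    rw [← mul_sub, Complex.sub_conj, ← hg.im_cauchy ht, ← Complex.im_ofReal_mul]
    congr 1
    have := Complex.I_ne_zero
    push_cast
    field_simp
    simp only [hG]
    ring
  rw [hI, integral_const_mul, integral_sub i1 i2, hz, zero_sub, ← hX]
  have hE1 := hf.energy_cauchy_le ht
  have hE2 := hh.energy_cauchy_le ht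
  calc |((2 * Complex.I)⁻¹ * -X).im| ≤ ‖(2 * Complex.I)⁻¹ * -X‖ := Complex.abs_im_le_norm _
    _ = 1 / 2 * ‖X‖ := by simp
    _ ≤ 1 / 2 * (l / 2 * (2 * Real.pi ^ 2 * ∫ s, f s ^ 2)
        + 8 * (Real.pi * M) ^ 2 / l * (2 * Real.pi ^ 2 * ∫ s, h s ^ 2)) := by
        gcongr
        refine hXle.trans ?_
        gcongr
    _ = _ := by ring

/-- The Calderón commutator bound in bilinear form. -/
lemma bilinear_bound {f h g : ℝ → ℝ} (hf : Nice f) (hf' : Nice (deriv f))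
    (hd : Differentiable ℝ f) (hh : Nice h) (hg : Nice g) {M : ℝ}
    (hM : ∀ x y, |g x - g y| ≤ M * |x - y|) {l : ℝ} (hl : 0 < l) :
    |∫ p : ℝ × ℝ, deriv f p.1 * h p.2 * ((g p.1 - g p.2) / (p.1 - p.2))
        ∂((volume : Measure ℝ).prod volume)|
      ≤ l / 2 * (∫ x, f x ^ 2) + 8 * Real.pi ^ 2 * M ^ 2 / l * ∫ x, h x ^ 2 := by
  obtain ⟨B, hB0, hB⟩ := hg.bdd
  have hpos : ∀ᶠ t : ℝ in 𝓝[>] 0, 0 < t := eventually_mem_nhdsWithin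
  have hM0 : 0 ≤ M := by simpa using (abs_nonneg _).trans (hM 1 0)
  have lip1 : ∀ t > 0, ∀ x y, |pconv g t x - pconv g t y| ≤ Real.pi * M * |x - y| :=
    fun t ht => lip_pconv hg.meas hB hM ht
  have bd1 : ∀ t > 0, ∀ x, |pconv g t x| ≤ Real.pi * B := fun t ht => abs_pconv_le hB ht
  have lip2 : ∀ t > 0, ∀ x y, |pconv (pconv g t) t x - pconv (pconv g t) t y|
      ≤ Real.pi * (Real.pi * M) * |x - y| := fun t ht =>
    lip_pconv (continuous_of_lip (lip1 t ht)).measurable (bd1 t ht) (lip1 t ht) ht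
  have hV : ∀ x, Tendsto (fun t => pconv (pconv g t) t x) (𝓝[>] 0)
      (𝓝 (Real.pi * (Real.pi * g x))) := fun x =>
    tendsto_pconv bd1 lip1
      (tendsto_pconv (fun _ _ => hB) (fun _ _ => hM) tendsto_const_nhds)
  -- The difference quotients stay bounded by `π² M`, so dominated convergence applies.
  have hlim : Tendsto (fun t => ∫ p : ℝ × ℝ, deriv f p.1 * h p.2 *
        ((pconv (pconv g t) t p.1 - pconv (pconv g t) t p.2) / (p.1 - p.2))
        ∂((volume : Measure ℝ).prod volume)) (𝓝[>] 0)
      (𝓝 (∫ p : ℝ × ℝ, deriv f p.1 * h p.2 *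
        ((Real.pi * (Real.pi * g p.1) - Real.pi * (Real.pi * g p.2)) / (p.1 - p.2))
        ∂((volume : Measure ℝ).prod volume))) := by
    refine tendsto_integral_filter_of_dominated_convergence
      (fun p => |deriv f p.1 * h p.2| * (Real.pi * (Real.pi * M))) ?_ ?_
      ((hf'.integrable_prod hh).norm.mul_const _) (ae_of_all _ fun p => ?_)
    · filter_upwards [hpos] with t ht
      have hc := (continuous_of_lip (lip2 t ht)).measurable
      refine (hf'.integrable_prod hh).aestronglyMeasurable.mul (Measurable.aestronglyMeasurable ?_)
      exact ((hc.comp measurable_fst).sub (hc.comp measurable_snd)).div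
        (measurable_fst.sub measurable_snd)
    · filter_upwards [hpos] with t ht
      refine ae_of_all _ fun p => ?_
      rw [norm_mul, Real.norm_eq_abs, Real.norm_eq_abs, abs_div]
      refine mul_le_mul_of_nonneg_left ?_ (abs_nonneg _)
      exact div_le_of_le_mul₀ (abs_nonneg _) (by positivity) (lip2 t ht _ _)
    · exact (((hV p.1).sub (hV p.2)).div_const _).const_mul _
  have hle := le_of_tendsto hlim.abs
    (hpos.mono fun t ht => bilinear_height hf hf' hd hh hg hM hl ht)
  have e : ∀ p : ℝ × ℝ, deriv f p.1 * h p.2 *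
        ((Real.pi * (Real.pi * g p.1) - Real.pi * (Real.pi * g p.2)) / (p.1 - p.2))
      = Real.pi ^ 2 * (deriv f p.1 * h p.2 * ((g p.1 - g p.2) / (p.1 - p.2))) := fun p => by ring
  simp_rw [e] at hle
  rw [integral_const_mul, abs_mul, abs_of_nonneg (by positivity)] at hle
  exact le_of_mul_le_mul_left hle (by positivity)

/-! ### Localisation and duality -/

lemma nice_of_hasCompactSupport {f : ℝ → ℝ} (hc : Continuous f) (hs : HasCompactSupport f) :
    Nice f := by
  obtain ⟨B, hB⟩ := hs.exists_bound_of_continuous hc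
  obtain ⟨R, hR⟩ := hs.isCompact.isBounded.subset_closedBall 0
  refine ⟨hc.measurable, ⟨B, (norm_nonneg _).trans (hB 0), hB⟩, max R 1, by positivity,
    fun x hx => ?_⟩
  by_contra hne
  have := hR (subset_tsupport f hne)
  rw [mem_closedBall_zero_iff, Real.norm_eq_abs] at this
  exact absurd (this.trans (le_max_left R 1)) (not_le.2 hx)

/-- A Lipschitz function agrees on a bounded interval, up to a constant, with a compactly
supported function having the same Lipschitz constant. -/
lemma exists_cutoff {g : ℝ → ℝ} {M : ℝ} (hM0 : 0 ≤ M) (hM : ∀ x y, |g x - g y| ≤ M * |x - y|)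
    {R : ℝ} (hR : 0 < R) :
    ∃ k, Nice k ∧ (∀ x y, |k x - k y| ≤ M * |x - y|) ∧ ∀ x, |x| ≤ R → k x = g x - g 0 := by
  set d : ℝ → ℝ := fun x => max 0 (2 * R - |x|) with hd
  have hd0 : ∀ x, 0 ≤ d x := fun x => le_max_left _ _
  have hd1 : ∀ x, d x ≤ 2 * R := fun x => max_le (by positivity) (by linarith [abs_nonneg x])
  have hdl : ∀ x y, |M * d x - M * d y| ≤ M * |x - y| := by
    intro x y
    rw [← mul_sub, abs_mul, abs_of_nonneg hM0]
    refine mul_le_mul_of_nonneg_left ?_ hM0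
    refine (abs_max_sub_max_le_max _ _ _ _).trans (max_le (by simp) ?_)
    rw [sub_sub_sub_cancel_left, abs_sub_comm x y]
    exact abs_abs_sub_abs_le_abs_sub y x
  set k : ℝ → ℝ := fun x => max (-(M * d x)) (min (g x - g 0) (M * d x)) with hk
  have hMd : ∀ x, 0 ≤ M * d x := fun x => mul_nonneg hM0 (hd0 x)
  have hlip : ∀ x y, |k x - k y| ≤ M * |x - y| := by
    intro x y
    refine (abs_max_sub_max_le_max _ _ _ _).trans (max_le ?_ ?_)
    · rw [neg_sub_neg, abs_sub_comm]
      exact hdl x y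
    · refine (abs_min_sub_min_le_max _ _ _ _).trans (max_le ?_ (hdl x y))
      simpa using hM x y
  refine ⟨k, ⟨(continuous_of_lip hlip).measurable, ⟨M * (2 * R), by positivity, fun x => ?_⟩,
    ⟨2 * R, by positivity, fun x hx => ?_⟩⟩, hlip, fun x hx => ?_⟩
  · have : |k x| ≤ M * d x :=
      abs_le.2 ⟨le_max_left _ _, max_le (by linarith [hMd x]) (min_le_right _ _)⟩
    exact this.trans (mul_le_mul_of_nonneg_left (hd1 x) hM0)
  · have : d x = 0 := max_eq_left (by linarith)
    simp [hk, this]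
  · have h1 : |g x - g 0| ≤ M * d x := by
      refine (hM x 0).trans (mul_le_mul_of_nonneg_left ?_ hM0)
      rw [sub_zero]
      exact le_max_of_le_right (by linarith)
    have h2 := abs_le.1 h1
    simp only [hk]
    rw [min_eq_left h2.2, max_eq_right h2.1]

/-- The commutator `[𝓗, g] ∂ₓ f`, written as an absolutely convergent integral. The integrand is
singular only at `z = x`, where division by zero gives the value `0`; this is a null set. -/
noncomputable def comm (g f : ℝ → ℝ) (x : ℝ) : ℝ :=
  (1 / Real.pi) * ∫ z : ℝ, ((g x - g z) / (x - z)) * deriv f z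

lemma abs_quotient_le {g : ℝ → ℝ} {M : ℝ} (hM0 : 0 ≤ M)
    (hM : ∀ x y, |g x - g y| ≤ M * |x - y|) (x y : ℝ) : |(g x - g y) / (x - y)| ≤ M := by
  rw [abs_div]
  exact div_le_of_le_mul₀ (abs_nonneg _) hM0 (hM x y)

lemma measurable_quotient {g : ℝ → ℝ} (hg : Measurable g) :
    Measurable (fun p : ℝ × ℝ => (g p.1 - g p.2) / (p.1 - p.2)) :=
  ((hg.comp measurable_fst).sub (hg.comp measurable_snd)).div (measurable_fst.sub measurable_snd)

lemma measurable_comm {g f : ℝ → ℝ} (hg : Measurable g) (hf' : Measurable (deriv f)) :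
    Measurable (comm g f) := by
  have : Measurable (fun p : ℝ × ℝ => (g p.1 - g p.2) / (p.1 - p.2) * deriv f p.2) :=
    (measurable_quotient hg).mul (hf'.comp measurable_snd)
  have h : Measurable (fun x => ∫ z : ℝ, (g x - g z) / (x - z) * deriv f z) :=
    (StronglyMeasurable.integral_prod_right' (ν := (volume : Measure ℝ)) (E := ℝ)
      this.stronglyMeasurable).measurable
  exact h.const_mul _

lemma abs_comm_le {g f : ℝ → ℝ} {M : ℝ} (hM0 : 0 ≤ M)
    (hM : ∀ x y, |g x - g y| ≤ M * |x - y|) (hf' : Nice (deriv f)) (x : ℝ) :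
    |comm g f x| ≤ 1 / Real.pi * (M * ∫ z, |deriv f z|) := by
  unfold comm
  rw [abs_mul, abs_of_nonneg (by positivity), ← integral_const_mul]
  refine mul_le_mul_of_nonneg_left ?_ (by positivity)
  rw [← Real.norm_eq_abs]
  refine norm_integral_le_of_norm_le (hf'.integrable.abs.const_mul _) (ae_of_all _ fun z => ?_)
  rw [norm_mul]
  exact mul_le_mul_of_nonneg_right (abs_quotient_le hM0 hM x z) (norm_nonneg _)

/-- The local `L²` bound: the bilinear form is tested against the commutator itself, restricted
to a large interval. -/
lemma local_bound {f g : ℝ → ℝ} (hf : Nice f) (hf' : Nice (deriv f)) (hd : Differentiable ℝ f)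
    {M : ℝ} (hM0 : 0 ≤ M) (hM : ∀ x y, |g x - g y| ≤ M * |x - y|) {R : ℝ} (hR0 : 0 < R)
    (hR : ∀ x, R < |x| → deriv f x = 0) :
    ∫ x in Icc (-R) R, comm g f x ^ 2 ≤ 16 * M ^ 2 * ∫ x, f x ^ 2 := by
  have hT := abs_comm_le hM0 hM hf'
  have hI : 0 ≤ ∫ z, |deriv f z| := integral_nonneg fun _ => abs_nonneg _
  -- The weight chosen below degenerates when `M = 0`, in which case the commutator vanishes.
  rcases hM0.eq_or_lt with rfl | hMpos
  · have : ∀ x, comm g f x = 0 := fun x => by simpa using hT x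
    simp [this]
  have hmem : ∀ x : ℝ, x ∈ Icc (-R) R ↔ |x| ≤ R := fun x => by rw [mem_Icc, ← abs_le]
  set h : ℝ → ℝ := (Icc (-R) R).indicator (comm g f) with hh
  have hin : ∀ x, |x| ≤ R → h x = comm g f x := fun x hx =>
    indicator_of_mem ((hmem x).2 hx) _
  have hout : ∀ x, R < |x| → h x = 0 := fun x hx =>
    indicator_of_notMem (fun hx' => absurd ((hmem x).1 hx') (not_le.2 hx)) _
  have nh : Nice h := by
    refine ⟨(measurable_comm (continuous_of_lip hM).measurable hf'.meas).indicator
      measurableSet_Icc, ⟨1 / Real.pi * (M * ∫ z, |deriv f z|), by positivity, fun x => ?_⟩,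
      R, hR0, hout⟩
    · rcases le_or_gt |x| R with hx | hx
      · rw [hin x hx]; exact hT x
      · rw [hout x hx, abs_zero]; positivity
  -- Only difference quotients of `g` on `[-R, R]` enter the bilinear form.
  obtain ⟨k, nk, klip, kg⟩ := exists_cutoff hM0 hM hR0
  have hQ : ∫ x in Icc (-R) R, comm g f x ^ 2 = ∫ x, h x ^ 2 := by
    rw [← integral_indicator measurableSet_Icc]
    refine integral_congr_ae (ae_of_all _ fun x => ?_)
    rcases le_or_gt |x| R with hx | hx
    · simp only [hin x hx, indicator_of_mem ((hmem x).2 hx)]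
    · have : x ∉ Icc (-R) R := fun hx' => absurd ((hmem x).1 hx') (not_le.2 hx)
      simp [hout x hx, indicator_of_notMem this]
  have hip : Integrable (fun p : ℝ × ℝ => deriv f p.1 * h p.2 * ((k p.1 - k p.2) / (p.1 - p.2)))
      ((volume : Measure ℝ).prod volume) :=
    (hf'.integrable_prod nh).mul_bdd (measurable_quotient nk.meas).aestronglyMeasurable
      (ae_of_all _ fun p => abs_quotient_le hM0 klip _ _)
  have hform : ∫ p : ℝ × ℝ, deriv f p.1 * h p.2 * ((k p.1 - k p.2) / (p.1 - p.2))
      ∂((volume : Measure ℝ).prod volume) = Real.pi * ∫ x, h x ^ 2 := by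
    rw [integral_prod_symm _ hip, ← integral_const_mul]
    refine integral_congr_ae (ae_of_all _ fun r => ?_)
    rcases le_or_gt |r| R with hr | hr
    · have e : ∀ s, deriv f s * h r * ((k s - k r) / (s - r))
          = h r * ((g r - g s) / (r - s) * deriv f s) := by
        intro s
        rcases le_or_gt |s| R with hs | hs
        · rw [kg s hs, kg r hr, sub_sub_sub_cancel_right, ← neg_sub (g r), ← neg_sub r,
            neg_div_neg_eq]
          ring
        · simp [hR s hs]
      simp only [e]
      rw [integral_const_mul]
      have : ∫ s, (g r - g s) / (r - s) * deriv f s = Real.pi * h r := by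
        rw [hin r hr, comm]
        field_simp
      rw [this]
      ring
    · simp [hout r hr]
  have hpi := Real.pi_pos
  -- With this weight the term in `h` on the right is half of the left-hand side.
  have hmain := bilinear_bound hf hf' hd nh nk klip (l := 16 * Real.pi * M ^ 2) (by positivity)
  rw [hform] at hmain
  have h1 := (le_abs_self _).trans hmain
  have h2 : 8 * Real.pi ^ 2 * M ^ 2 / (16 * Real.pi * M ^ 2) = Real.pi / 2 := by
    field_simp; norm_num
  rw [h2] at h1
  rw [hQ]
  refine le_of_mul_le_mul_left (a := Real.pi / 2) ?_ (by positivity)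
  linarith

/-- The Calderón commutator bound in terms of integrals of squares. -/
lemma global_bound {f g : ℝ → ℝ} (hf : Nice f) (hf' : Nice (deriv f)) (hd : Differentiable ℝ f)
    {M : ℝ} (hM0 : 0 ≤ M) (hM : ∀ x y, |g x - g y| ≤ M * |x - y|) :
    Integrable (fun x => comm g f x ^ 2) ∧
      ∫ x, comm g f x ^ 2 ≤ 16 * M ^ 2 * ∫ x, f x ^ 2 := by
  obtain ⟨R, hR0, hR⟩ := hf'.supp
  have hcov : AECover (volume : Measure ℝ) atTop (fun r : ℝ => Icc (-r) r) :=
    aecover_Icc tendsto_neg_atTop_atBot tendsto_id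
  have hm := (measurable_comm (continuous_of_lip hM).measurable hf'.meas).pow_const 2
  have hle : ∀ᶠ r : ℝ in atTop, ∫ x in Icc (-r) r, comm g f x ^ 2 ≤ 16 * M ^ 2 * ∫ x, f x ^ 2 := by
    filter_upwards [eventually_ge_atTop R] with r hr
    exact local_bound hf hf' hd hM0 hM (hR0.trans_le hr) fun x hx => hR x (hr.trans_lt hx)
  have hint : Integrable (fun x => comm g f x ^ 2) := by
    refine hcov.integrable_of_integral_bounded_of_nonneg_ae _ (fun r => ?_)
      (ae_of_all _ fun x => sq_nonneg _) hle
    refine Measure.integrableOn_of_bounded (M := (1 / Real.pi * (M * ∫ z, |deriv f z|)) ^ 2)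
      (by simp) hm.aestronglyMeasurable (ae_of_all _ fun x => ?_)
    rw [Real.norm_eq_abs, abs_pow]
    exact pow_le_pow_left₀ (abs_nonneg _) (abs_comm_le hM0 hM hf' x) 2
  exact ⟨hint, le_of_tendsto (hcov.integral_tendsto_of_countably_generated hint) hle⟩

lemma eLpNorm_two_eq {u : ℝ → ℝ} (hm : Measurable u) (hi : Integrable (fun x => u x ^ 2)) :
    eLpNorm u 2 (volume : Measure ℝ) = ENNReal.ofReal √(∫ x, u x ^ 2) := by
  have h2 : MemLp u 2 (volume : Measure ℝ) :=
    (memLp_two_iff_integrable_sq hm.aestronglyMeasurable).2 hi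
  rw [h2.eLpNorm_eq_integral_rpow_norm (by norm_num) (by norm_num), Real.sqrt_eq_rpow]
  simp

end CalderonCommutator

open CalderonCommutator

/-- The Calderón commutator estimate: `‖[𝓗,g]∂ₓ f‖_{L²} ≤ C‖g'‖_∞‖f‖_{L²}`. -/
theorem calderon_commutator_estimate :
    ∃ C : ℝ, 0 < C ∧
      ∀ g : ℝ → ℝ, ContDiff ℝ 1 g →
        ∀ M : ℝ, 0 ≤ M → (∀ x : ℝ, |deriv g x| ≤ M) →
          ∀ f : ℝ → ℝ, ContDiff ℝ (⊤ : ℕ∞) f → HasCompactSupport f →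
            eLpNorm
              (fun x : ℝ =>
                (1 / Real.pi) * ∫ z : ℝ, ((g x - g z) / (x - z)) * deriv f z)
              2 (volume : Measure ℝ) ≤
              ENNReal.ofReal (C * M) * eLpNorm f 2 (volume : Measure ℝ) := by
  refine ⟨4, by norm_num, fun g hg M hM0 hgM f hf hfs => ?_⟩
  have hlip : ∀ x y, |g x - g y| ≤ M * |x - y| := fun x y =>
    convex_univ.norm_image_sub_le_of_norm_deriv_le
      (fun z _ => hg.differentiable (by norm_num) z) (fun z _ => hgM z) (Set.mem_univ y)
      (Set.mem_univ x)
  have nf := nice_of_hasCompactSupport hf.continuous hfs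
  have nf' := nice_of_hasCompactSupport (hf.continuous_deriv (by simp)) hfs.deriv
  obtain ⟨hi, hle⟩ := global_bound nf nf' (hf.differentiable (by simp)) hM0 hlip
  change eLpNorm (comm g f) 2 volume ≤ _
  rw [eLpNorm_two_eq (measurable_comm hg.continuous.measurable nf'.meas) hi,
    eLpNorm_two_eq nf.meas nf.sq.integrable, ← ENNReal.ofReal_mul (by positivity)]
  refine ENNReal.ofReal_le_ofReal ((Real.sqrt_le_sqrt hle).trans (le_of_eq ?_))
  rw [Real.sqrt_mul (by positivity), show 16 * M ^ 2 = (4 * M) ^ 2 by ring,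
    Real.sqrt_sq (by positivity)]
end

section
/- Let c > 0 and α > 0, and let K(x,y) = ∫_0^∞ (α√t/(α²t²+x²))·exp(−(ct + y²/(4t))) dt. Then K ∈ L¹(ℝ²) and for every (ξ,η) ∈ ℝ², ∫_{ℝ²} exp(−i(xξ+yη))·K(x,y) dx dy = 2π^{3/2}/(c + α|ξ| + η²). -/
/-!
For fixed `t > 0` the integrand of `K` splits as `√t / t * exp (-c t)` times the Poisson kernel
`a / (a² + x²)` with `a = α t`, times the Gaussian `exp (-y² / (4 t))`. The Fourier transforms of the
last two are `π exp (-a |ξ|)` and `2 √π √t exp (-t η²)`, so the slice at `t` has transform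
`2 π^(3/2) exp (-(c + α |ξ| + η²) t)` (`integral_slice`): the powers of `t` cancel. The integrand is
nonnegative, so at frequency zero this says that its `L¹` norm in `(x, y)` is `2 π^(3/2) exp (-c t)`,
which is integrable in `t`; hence the integrand is integrable on `(0, ∞) × ℝ²`
(`integrable_kernelIntegrand`). Tonelli and Fubini then give `K ∈ L¹` and reduce the transform of `K`
to `∫ exp (-(c + α |ξ| + η²) t) dt` over `(0, ∞)`.

The transform of the Poisson kernel (`integral_poisson`) comes from Fourier inversion applied to
`x ↦ exp (-a |x|)`, whose transform is an elementary integral over two half-lines.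
-/

open MeasureTheory

/-- The kernel `K` of the BO-ZK solitary-wave equation. -/
noncomputable def Kker (c α : ℝ) (x y : ℝ) : ℝ :=
  ∫ t in Set.Ioi (0 : ℝ),
    (α * Real.sqrt t / (α ^ 2 * t ^ 2 + x ^ 2)) * Real.exp (-(c * t + y ^ 2 / (4 * t)))

lemma integrableOn_Iic_exp_abs {a : ℝ} (ha : 0 < a) (s : ℝ) :
    IntegrableOn (fun x : ℝ => Complex.exp ((s * x : ℝ) * Complex.I) * Complex.exp (-a * |x| : ℝ))
      (Set.Iic 0) ∧
    ∫ x in Set.Iic (0 : ℝ), Complex.exp ((s * x : ℝ) * Complex.I) * Complex.exp (-a * |x| : ℝ) =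
      1 / (a + s * Complex.I) := by
  have h : Set.EqOn (fun x : ℝ => Complex.exp ((a + s * Complex.I) * x))
      (fun x : ℝ => Complex.exp ((s * x : ℝ) * Complex.I) * Complex.exp (-a * |x| : ℝ))
      (Set.Iic 0) := by
    intro x hx
    simp only [abs_of_nonpos (Set.mem_Iic.1 hx), ← Complex.exp_add]
    congr 1; push_cast; ring
  refine ⟨(integrableOn_exp_mul_complex_Iic (by simpa using ha) 0).congr_fun h measurableSet_Iic, ?_⟩
  rw [← setIntegral_congr_fun measurableSet_Iic h, integral_exp_mul_complex_Iic (by simpa using ha)]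
  simp

lemma integrableOn_Ioi_exp_abs {a : ℝ} (ha : 0 < a) (s : ℝ) :
    IntegrableOn (fun x : ℝ => Complex.exp ((s * x : ℝ) * Complex.I) * Complex.exp (-a * |x| : ℝ))
      (Set.Ioi 0) ∧
    ∫ x in Set.Ioi (0 : ℝ), Complex.exp ((s * x : ℝ) * Complex.I) * Complex.exp (-a * |x| : ℝ) =
      1 / (a - s * Complex.I) := by
  have h : Set.EqOn (fun x : ℝ => Complex.exp ((-a + s * Complex.I) * x))
      (fun x : ℝ => Complex.exp ((s * x : ℝ) * Complex.I) * Complex.exp (-a * |x| : ℝ))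
      (Set.Ioi 0) := by
    intro x hx
    simp only [abs_of_pos (Set.mem_Ioi.1 hx), ← Complex.exp_add]
    congr 1; push_cast; ring
  refine ⟨(integrableOn_exp_mul_complex_Ioi (by simpa using ha) 0).congr_fun h measurableSet_Ioi, ?_⟩
  rw [← setIntegral_congr_fun measurableSet_Ioi h, integral_exp_mul_complex_Ioi (by simpa using ha)]
  simp only [Complex.ofReal_zero, mul_zero, Complex.exp_zero]
  rw [← neg_div_neg_eq]
  congr 1 <;> ring

lemma integrable_exp_abs {a : ℝ} (ha : 0 < a) :
    Integrable (fun x : ℝ => Complex.exp (-a * |x| : ℝ)) := by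
  rw [← integrableOn_univ, ← Set.Iic_union_Ioi (a := (0 : ℝ))]
  simpa using (integrableOn_Iic_exp_abs ha 0).1.union (integrableOn_Ioi_exp_abs ha 0).1

lemma integral_exp_abs {a : ℝ} (ha : 0 < a) (s : ℝ) :
    ∫ x : ℝ, Complex.exp ((s * x : ℝ) * Complex.I) * Complex.exp (-a * |x| : ℝ) =
      (2 * (a / (a ^ 2 + s ^ 2)) : ℝ) := by
  rw [← intervalIntegral.integral_Iic_add_Ioi (integrableOn_Iic_exp_abs ha s).1
    (integrableOn_Ioi_exp_abs ha s).1, (integrableOn_Iic_exp_abs ha s).2,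
    (integrableOn_Ioi_exp_abs ha s).2]
  have h1 : (a + s * Complex.I : ℂ) ≠ 0 := fun h => ha.ne' (by simpa using congrArg Complex.re h)
  have h2 : (a - s * Complex.I : ℂ) ≠ 0 := fun h => ha.ne' (by simpa using congrArg Complex.re h)
  have h3 : ((a : ℂ) ^ 2 + s ^ 2) = (a + s * Complex.I) * (a - s * Complex.I) := by
    ring_nf; simp
  push_cast
  rw [h3]
  field_simp
  ring

lemma integrable_poisson {a : ℝ} (ha : 0 < a) :
    Integrable (fun x : ℝ => a / (a ^ 2 + x ^ 2)) := by
  refine ((integrable_inv_one_add_sq.comp_div ha.ne').const_mul a⁻¹).congr (ae_of_all _ fun x => ?_)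
  have : a ^ 2 + x ^ 2 ≠ 0 := by positivity
  have : 1 + (x / a) ^ 2 ≠ 0 := by positivity
  simp only
  field_simp

/-- The Fourier transform of the Poisson kernel, by Fourier inversion from `integral_exp_abs`. -/
lemma integral_poisson {a : ℝ} (ha : 0 < a) (ξ : ℝ) :
    ∫ x : ℝ, Complex.exp (-Complex.I * (x * ξ : ℝ)) * (a / (a ^ 2 + x ^ 2) : ℝ) =
      (Real.pi * Real.exp (-(a * |ξ|)) : ℝ) := by
  set g : ℝ → ℂ := fun x => Complex.exp (-a * |x| : ℝ) with hg
  have hF : FourierTransform.fourier g =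
      fun w : ℝ => ((2 * (a / (a ^ 2 + (-2 * Real.pi * w) ^ 2)) : ℝ) : ℂ) := by
    ext w
    rw [Real.fourier_real_eq_integral_exp_smul, ← integral_exp_abs ha]
    refine integral_congr_ae (ae_of_all _ fun x => ?_)
    simp only [hg, smul_eq_mul]
    congr 4; ring
  have hpi : (-2 * Real.pi) ≠ 0 := by simp [Real.pi_ne_zero]
  have hFi : Integrable (FourierTransform.fourier g) := by
    rw [hF]
    exact (((integrable_poisson ha).comp_mul_left' hpi).const_mul 2).ofReal
  have hinv := (integrable_exp_abs ha).fourierInv_fourier_eq hFi (v := ξ)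
    (by fun_prop)
  rw [hF, Real.fourierInv_eq'] at hinv
  have hsub := Measure.integral_comp_mul_left
    (fun x : ℝ => Complex.exp (-Complex.I * (x * ξ : ℝ)) * (a / (a ^ 2 + x ^ 2) : ℝ)) (-2 * Real.pi)
  have hcomp : ∫ v : ℝ, Complex.exp ((2 * Real.pi * inner ℝ v ξ : ℝ) * Complex.I) •
        ((2 * (a / (a ^ 2 + (-2 * Real.pi * v) ^ 2)) : ℝ) : ℂ) =
      2 * ∫ v : ℝ, Complex.exp (-Complex.I * ((-2 * Real.pi * v) * ξ : ℝ)) *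
        (a / (a ^ 2 + (-2 * Real.pi * v) ^ 2) : ℝ) := by
    rw [← integral_const_mul]
    refine integral_congr_ae (ae_of_all _ fun x => ?_)
    have : Complex.exp ((2 * Real.pi * inner ℝ x ξ : ℝ) * Complex.I) =
        Complex.exp (-Complex.I * ((-2 * Real.pi * x) * ξ : ℝ)) := by
      congr 1; simp; ring
    simp only [smul_eq_mul, this]
    push_cast; ring
  rw [hcomp, hsub] at hinv
  have habs : |(-2 * Real.pi)⁻¹| = (2 * Real.pi)⁻¹ := by
    rw [abs_inv, neg_mul, abs_neg, abs_of_pos Real.two_pi_pos]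
  rw [habs, Complex.real_smul] at hinv
  have hpc : (Real.pi : ℂ) ≠ 0 := by exact_mod_cast Real.pi_ne_zero
  have key (J E : ℂ) (h : 2 * (((2 * Real.pi)⁻¹ : ℝ) * J) = E) : J = Real.pi * E := by
    rw [← h]; push_cast; field_simp
  rw [← neg_mul, Complex.ofReal_mul]
  refine key _ _ (hinv.trans ?_)
  simp

lemma integral_gauss {t : ℝ} (ht : 0 < t) (η : ℝ) :
    ∫ y : ℝ, Complex.exp (-Complex.I * (y * η : ℝ)) * (Real.exp (-(y ^ 2 / (4 * t))) : ℝ) =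
      (2 * √Real.pi * √t * Real.exp (-(t * η ^ 2)) : ℝ) := by
  have h := fourierIntegral_gaussian (b := ((1 / (4 * t) : ℝ) : ℂ))
    (by rw [Complex.ofReal_re]; positivity) (-η : ℂ)
  have e : (Real.pi / ((1 / (4 * t) : ℝ) : ℂ)) ^ (1 / 2 : ℂ) = (2 * √Real.pi * √t : ℝ) := by
    have : (Real.pi / ((1 / (4 * t) : ℝ) : ℂ)) = ((2 ^ 2 * Real.pi * t : ℝ) : ℂ) := by
      push_cast; field_simp; norm_num; ring
    rw [this, show (1 / 2 : ℂ) = ((1 / 2 : ℝ) : ℂ) by push_cast; rfl,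
      ← Complex.ofReal_cpow (by positivity), ← Real.sqrt_eq_rpow, Real.sqrt_mul (by positivity),
      Real.sqrt_mul (by positivity), Real.sqrt_sq (by norm_num)]
  have htc : (t : ℂ) ≠ 0 := by exact_mod_cast ht.ne'
  rw [e] at h
  calc _ = _ := integral_congr_ae (ae_of_all _ fun y => ?_)
    _ = _ := h
    _ = _ := ?_
  · push_cast
    congr 2
    · ring
    · field_simp
  · push_cast
    congr 2
    field_simp

lemma integrable_gauss {t : ℝ} (ht : 0 < t) :
    Integrable (fun y : ℝ => Real.exp (-(y ^ 2 / (4 * t)))) := by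
  refine (integrable_exp_neg_mul_sq (b := 1 / (4 * t)) (by positivity)).congr
    (ae_of_all _ fun y => ?_)
  simp only
  congr 1; ring

/-- The integrand defining `Kker`. -/
noncomputable def kernelIntegrand (c α t : ℝ) (z : ℝ × ℝ) : ℝ :=
  (α * √t / (α ^ 2 * t ^ 2 + z.1 ^ 2)) * Real.exp (-(c * t + z.2 ^ 2 / (4 * t)))

lemma kernelIntegrand_eq {α t : ℝ} (c : ℝ) (ht : 0 < t) (z : ℝ × ℝ) :
    kernelIntegrand c α t z = (√t / t * Real.exp (-(c * t))) *
      ((α * t / ((α * t) ^ 2 + z.1 ^ 2)) * Real.exp (-(z.2 ^ 2 / (4 * t)))) := by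
  rw [kernelIntegrand, neg_add, Real.exp_add, mul_pow]
  field_simp

lemma integrable_slice {α t : ℝ} (c : ℝ) (hα : 0 < α) (ht : 0 < t) :
    Integrable (kernelIntegrand c α t) := by
  rw [funext (kernelIntegrand_eq c ht)]
  exact ((integrable_poisson (mul_pos hα ht)).mul_prod (integrable_gauss ht)).const_mul _

/-- The Fourier transform of the integrand of `Kker` in the space variables, at fixed `t`. -/
lemma integral_slice {α t : ℝ} (c : ℝ) (hα : 0 < α) (ht : 0 < t) (ξ : ℝ × ℝ) :
    ∫ z : ℝ × ℝ, Complex.exp (-Complex.I * ((z.1 * ξ.1 + z.2 * ξ.2 : ℝ) : ℂ)) *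
        (kernelIntegrand c α t z : ℂ) =
      (2 * Real.pi ^ (3 / 2 : ℝ) * Real.exp (-(c + α * |ξ.1| + ξ.2 ^ 2) * t) : ℝ) := by
  have hsplit (z : ℝ × ℝ) : Complex.exp (-Complex.I * ((z.1 * ξ.1 + z.2 * ξ.2 : ℝ) : ℂ)) *
        (kernelIntegrand c α t z : ℂ) = ((√t / t * Real.exp (-(c * t)) : ℝ) : ℂ) *
      ((Complex.exp (-Complex.I * (z.1 * ξ.1 : ℝ)) *
          (α * t / ((α * t) ^ 2 + z.1 ^ 2) : ℝ)) *
        (Complex.exp (-Complex.I * (z.2 * ξ.2 : ℝ)) *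
          (Real.exp (-(z.2 ^ 2 / (4 * t))) : ℝ))) := by
    rw [kernelIntegrand_eq c ht, Complex.ofReal_add, mul_add, Complex.exp_add]
    push_cast
    ring
  simp_rw [hsplit]
  rw [integral_const_mul, Measure.volume_eq_prod, integral_prod_mul
    (fun x : ℝ => Complex.exp (-Complex.I * (x * ξ.1 : ℝ)) * (α * t / ((α * t) ^ 2 + x ^ 2) : ℝ))
    (fun y : ℝ => Complex.exp (-Complex.I * (y * ξ.2 : ℝ)) * (Real.exp (-(y ^ 2 / (4 * t))) : ℝ)),
    integral_poisson (mul_pos hα ht), integral_gauss ht]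
  rw [← Complex.ofReal_mul, ← Complex.ofReal_mul]
  congr 1
  have hp : Real.pi ^ (3 / 2 : ℝ) = Real.pi * √Real.pi := by
    rw [show (3 / 2 : ℝ) = 1 + 1 / 2 by norm_num, Real.rpow_add Real.pi_pos, Real.rpow_one,
      Real.sqrt_eq_rpow]
  have he : Real.exp (-(c + α * |ξ.1| + ξ.2 ^ 2) * t) =
      Real.exp (-(c * t)) * Real.exp (-(α * t * |ξ.1|)) * Real.exp (-(t * ξ.2 ^ 2)) := by
    rw [← Real.exp_add, ← Real.exp_add]; congr 1; ring
  have hs : √t / t * √t = 1 := by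
    rw [div_mul_eq_mul_div, Real.mul_self_sqrt ht.le, div_self ht.ne']
  rw [hp, he]
  linear_combination (Real.exp (-(c * t)) * (Real.pi * Real.exp (-(α * t * |ξ.1|))) *
    (2 * √Real.pi * Real.exp (-(t * ξ.2 ^ 2)))) * hs

lemma integrable_kernelIntegrand {c α : ℝ} (hc : 0 < c) (hα : 0 < α) :
    Integrable (fun p : ℝ × (ℝ × ℝ) => kernelIntegrand c α p.1 p.2)
      ((volume.restrict (Set.Ioi (0 : ℝ))).prod volume) := by
  have hmeas : Measurable (fun p : ℝ × (ℝ × ℝ) => kernelIntegrand c α p.1 p.2) := by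
    unfold kernelIntegrand
    fun_prop
  refine (integrable_prod_iff hmeas.aestronglyMeasurable).2
    ⟨(ae_restrict_iff' measurableSet_Ioi).2 (ae_of_all _ fun t ht => integrable_slice c hα ht), ?_⟩
  refine IntegrableOn.congr_fun (((integrableOn_exp_mul_Ioi (neg_lt_zero.2 hc) 0).const_mul
    (2 * Real.pi ^ (3 / 2 : ℝ)))) (fun t ht => ?_) measurableSet_Ioi
  have hnorm (z : ℝ × ℝ) : ‖kernelIntegrand c α t z‖ = kernelIntegrand c α t z :=
    Real.norm_of_nonneg (by unfold kernelIntegrand; positivity)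
  simp_rw [hnorm]
  have h := integral_slice c hα ht 0
  simp only [Prod.fst_zero, Prod.snd_zero, mul_zero, add_zero, Complex.ofReal_zero,
    Complex.exp_zero, one_mul, abs_zero, ne_eq, OfNat.ofNat_ne_zero, not_false_eq_true,
    zero_pow] at h
  rw [integral_complex_ofReal] at h
  exact (Complex.ofReal_injective h).symm

/-- `K ∈ L¹(ℝ²)` and the Fourier transform of `K` is `2π^{3/2}/(c+α|ξ|+η²)`. -/
theorem kernel_fourier_transform (c α : ℝ) (hc : 0 < c) (hα : 0 < α) :
    Integrable (fun z : ℝ × ℝ => Kker c α z.1 z.2) (volume : Measure (ℝ × ℝ)) ∧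
    ∀ ξ : ℝ × ℝ,
      (∫ z : ℝ × ℝ,
          Complex.exp (-Complex.I * ((z.1 * ξ.1 + z.2 * ξ.2 : ℝ) : ℂ)) *
            (Kker c α z.1 z.2 : ℂ)) =
        ((2 * Real.pi ^ (3 / 2 : ℝ) / (c + α * |ξ.1| + ξ.2 ^ 2) : ℝ) : ℂ) := by
  have hint := integrable_kernelIntegrand hc hα
  refine ⟨hint.integral_prod_right, fun ξ => ?_⟩
  have hK (z : ℝ × ℝ) : Complex.exp (-Complex.I * ((z.1 * ξ.1 + z.2 * ξ.2 : ℝ) : ℂ)) *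
      (Kker c α z.1 z.2 : ℂ) = ∫ t in Set.Ioi (0 : ℝ),
        Complex.exp (-Complex.I * ((z.1 * ξ.1 + z.2 * ξ.2 : ℝ) : ℂ)) *
          (kernelIntegrand c α t z : ℂ) := by
    rw [integral_const_mul, integral_complex_ofReal]
    rfl
  have hint2 : Integrable (fun p : ℝ × (ℝ × ℝ) =>
      Complex.exp (-Complex.I * ((p.2.1 * ξ.1 + p.2.2 * ξ.2 : ℝ) : ℂ)) *
        (kernelIntegrand c α p.1 p.2 : ℂ)) ((volume.restrict (Set.Ioi (0 : ℝ))).prod volume) := by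
    refine hint.ofReal.bdd_mul (c := 1) (by fun_prop) (ae_of_all _ fun p => ?_)
    simp [Complex.norm_exp]
  have hs : 0 < c + α * |ξ.1| + ξ.2 ^ 2 := by positivity
  simp_rw [hK]
  rw [← integral_integral_swap (f := fun (t : ℝ) (z : ℝ × ℝ) =>
      Complex.exp (-Complex.I * ((z.1 * ξ.1 + z.2 * ξ.2 : ℝ) : ℂ)) *
        (kernelIntegrand c α t z : ℂ)) hint2,
    setIntegral_congr_fun measurableSet_Ioi (fun t ht => integral_slice c hα ht ξ),
    integral_complex_ofReal, integral_const_mul, integral_exp_mul_Ioi (neg_lt_zero.2 hs)]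
  congr 1
  simp only [mul_zero, Real.exp_zero, neg_div_neg_eq]
  ring
end

section
/- Let c > 0 and α > 0, and let K(x,y) = ∫_0^∞ (α√t/(α²t²+x²))·exp(−(ct + y²/(4t))) dt. Then for every y ∈ ℝ, ∫_ℝ K(x,y) dx = π^{3/2}·c^{−1/2}·exp(−√c·|y|). In particular, y ↦ ‖K(·,y)‖_{L¹_x(ℝ)} decays exponentially in |y| and belongs to L^q(ℝ) for every 1 ≤ q ≤ ∞. -/
/-!
The integrand of `K` is nonnegative, so Fubini applies as soon as the iterated integral in the
order `dx dt` is finite. The inner integral is a Cauchy (Lorentzian) integral, equal to `π / √t`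
times the exponential (`lorentzian_integral`), and what remains is
`π ∫₀^∞ t^{-1/2} exp (-(c t + b / t)) dt` with `b = y² / 4`.

For `b = 0` this is a Gamma integral. For `b > 0`, write `p = √c`, `q = √b` and substitute
`t = ψ(v)²`, where `ψ(v) = (v + √(v² + 4pq)) / (2p)` is the inverse of `u ↦ p u - q / u`, a
bijection from `(0, ∞)` to `ℝ`. The exponent becomes `-(v² + 2pq)` and the weight `t^{-1/2} dt`
becomes `(1 + v / √(v² + 4pq)) / p dv`, whose second term is odd and integrates to zero against
the Gaussian. Hence the integral is `√(π / c) exp (-2√(c b))` (`integral_inv_sqrt_mul_exp`).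
The remaining claims follow from this closed form.
-/

open MeasureTheory

lemma lorentzian_integrable {A : ℝ} (hA : 0 < A) :
    Integrable (fun x : ℝ => A / (A ^ 2 + x ^ 2)) := by
  have h := (integrable_inv_one_add_sq.comp_div hA.ne').const_mul A⁻¹
  refine h.congr (Filter.Eventually.of_forall fun x => ?_)
  have : A ^ 2 + x ^ 2 ≠ 0 := by positivity
  simp only
  field_simp

lemma lorentzian_integral {A : ℝ} (hA : 0 < A) :
    ∫ x : ℝ, A / (A ^ 2 + x ^ 2) = Real.pi := by
  have h : (fun x : ℝ => A / (A ^ 2 + x ^ 2)) = fun x => A⁻¹ * (1 + (x / A) ^ 2)⁻¹ := by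
    funext x
    have : A ^ 2 + x ^ 2 ≠ 0 := by positivity
    field_simp
  rw [h, integral_const_mul, Measure.integral_comp_div (fun x : ℝ => (1 + x ^ 2)⁻¹),
    integral_univ_inv_one_add_sq, abs_of_pos hA, smul_eq_mul]
  field_simp

lemma integrableOn_inv_sqrt_mul_exp {a b : ℝ} (ha : 0 < a) (hb : 0 ≤ b) :
    IntegrableOn (fun t : ℝ => (√t)⁻¹ * Real.exp (-(a * t + b / t))) (Set.Ioi 0) := by
  have h := integrableOn_rpow_mul_exp_neg_mul_rpow (p := 1) (s := -(1 / 2)) (b := a)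
    (by norm_num) one_pos ha
  refine Integrable.mono' h (by fun_prop) ?_
  filter_upwards [ae_restrict_mem measurableSet_Ioi] with t ht
  have ht : 0 < t := ht
  rw [Real.norm_of_nonneg (by positivity), Real.rpow_neg ht.le, ← Real.sqrt_eq_rpow, Real.rpow_one]
  gcongr
  have : 0 ≤ b / t := by positivity
  linarith

/-- The odd part of the weight produced by the substitution disappears. -/
lemma integral_odd_part {k : ℝ} :
    ∫ v : ℝ, v / √(v ^ 2 + 4 * k) * Real.exp (-v ^ 2) = 0 := by
  have h := integral_neg_eq_self (fun v : ℝ => v / √(v ^ 2 + 4 * k) * Real.exp (-v ^ 2)) volume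
  simp only [neg_sq, neg_div, neg_mul, integral_neg] at h
  linarith

lemma integral_weighted_gaussian {k : ℝ} (hk : 0 < k) :
    ∫ v : ℝ, (1 + v / √(v ^ 2 + 4 * k)) * Real.exp (-v ^ 2) = √Real.pi := by
  have hg : Integrable (fun v : ℝ => Real.exp (-v ^ 2)) := by
    simpa using integrable_exp_neg_mul_sq one_pos
  have ho : Integrable (fun v : ℝ => v / √(v ^ 2 + 4 * k) * Real.exp (-v ^ 2)) := by
    refine hg.mono' (by fun_prop) (Filter.Eventually.of_forall fun v => ?_)
    have hr : 0 < √(v ^ 2 + 4 * k) := by positivity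
    rw [norm_mul, norm_div, Real.norm_of_nonneg hr.le, Real.norm_of_nonneg (Real.exp_pos _).le]
    refine mul_le_of_le_one_left (Real.exp_pos _).le ((div_le_one hr).2 ?_)
    exact Real.abs_le_sqrt (by linarith)
  simp only [add_mul, one_mul]
  rw [integral_add hg ho, integral_odd_part, add_zero]
  simpa using integral_gaussian 1

lemma integral_inv_sqrt_mul_exp_of_pos {p q : ℝ} (hp : 0 < p) (hq : 0 < q) :
    ∫ t in Set.Ioi (0 : ℝ), (√t)⁻¹ * Real.exp (-(p ^ 2 * t + q ^ 2 / t)) =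
      √Real.pi / p * Real.exp (-(2 * (p * q))) := by
  set k := p * q with hk
  have hk0 : 0 < k := by positivity
  set r : ℝ → ℝ := fun v => √(v ^ 2 + 4 * k) with hr
  set ψ : ℝ → ℝ := fun v => (v + r v) / (2 * p) with hψ
  have hr0 : ∀ v, 0 < r v := fun v => by simp only [hr]; positivity
  have hr2 : ∀ v, r v ^ 2 = v ^ 2 + 4 * k := fun v => Real.sq_sqrt (by positivity)
  have hvr : ∀ v, 0 < v + r v := fun v => by
    nlinarith [hr0 v, hr2 v, abs_lt_of_sq_lt_sq (by linarith [hr2 v] : v ^ 2 < r v ^ 2) (hr0 v).le,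
      neg_abs_le v]
  have hψ0 : ∀ v, 0 < ψ v := fun v => div_pos (hvr v) (by positivity)
  -- `ψ v` is the positive root `u` of `p u - q / u = v`
  have hinv : ∀ v, p * ψ v - q / ψ v = v := fun v => by
    have h1 : ψ v * (2 * p) = v + r v := by simp only [hψ]; field_simp
    have h2 := hψ0 v
    field_simp
    have h3 := hr2 v
    rw [show r v = ψ v * (2 * p) - v by linarith] at h3
    have h4 : p * (p * ψ v ^ 2 - q - ψ v * v) = 0 := by nlinarith
    have := (mul_eq_zero.1 h4).resolve_left hp.ne'
    linarith
  have hder : ∀ v ∈ Set.univ, HasDerivWithinAt (fun v => ψ v ^ 2)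
      (2 * ψ v * ((1 + v / r v) / (2 * p))) Set.univ v := fun v _ => by
    have h1 : HasDerivAt (fun v : ℝ => v ^ 2 + 4 * k) (2 * v) v := by
      simpa using (hasDerivAt_pow 2 v).add_const (4 * k)
    have h2 : HasDerivAt r (2 * v / (2 * r v)) v := h1.sqrt (by positivity)
    have h3 : HasDerivAt ψ ((1 + 2 * v / (2 * r v)) / (2 * p)) v :=
      ((hasDerivAt_id v).add h2).div_const _
    rw [mul_div_mul_left _ _ two_ne_zero] at h3
    have h4 := h3.pow 2
    refine (h4.congr_deriv ?_).hasDerivWithinAt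
    simp
  have hinj : Set.InjOn (fun v => ψ v ^ 2) Set.univ := fun v _ w _ h => by
    have h : ψ v ^ 2 = ψ w ^ 2 := h
    have h1 : ψ v = ψ w := (pow_left_inj₀ (hψ0 v).le (hψ0 w).le two_ne_zero).1 h
    rw [← hinv v, ← hinv w, h1]
  have himg : (fun v => ψ v ^ 2) '' Set.univ = Set.Ioi 0 := by
    ext t
    simp only [Set.image_univ, Set.mem_range, Set.mem_Ioi]
    constructor
    · rintro ⟨v, rfl⟩
      exact pow_pos (hψ0 v) 2
    · intro ht
      have hs : 0 < √t := Real.sqrt_pos.2 ht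
      refine ⟨p * √t - q / √t, ?_⟩
      have h1 : r (p * √t - q / √t) = p * √t + q / √t := by
        simp only [hr]
        rw [show (p * √t - q / √t) ^ 2 + 4 * k = (p * √t + q / √t) ^ 2 by
          rw [hk]; field_simp; ring]
        exact Real.sqrt_sq (by positivity)
      have h2 : ψ (p * √t - q / √t) = √t := by
        simp only [hψ, h1]
        field_simp
        ring
      rw [h2, Real.sq_sqrt ht.le]
  rw [← himg, integral_image_eq_integral_abs_deriv_smul MeasurableSet.univ hder hinj,
    setIntegral_univ, ← integral_weighted_gaussian hk0, div_mul_eq_mul_div, ← integral_mul_const,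
    ← integral_div]
  refine integral_congr_ae (Filter.Eventually.of_forall fun v => ?_)
  have h0 := hψ0 v
  have hw : 0 < 1 + v / r v := by
    have := div_pos (hvr v) (hr0 v)
    rwa [add_div, div_self (hr0 v).ne', add_comm] at this
  have he : -(p ^ 2 * ψ v ^ 2 + q ^ 2 / ψ v ^ 2) = -v ^ 2 + -(2 * k) := by
    nth_rewrite 3 [← hinv v]
    rw [hk]
    field_simp
    ring
  simp only [smul_eq_mul]
  rw [abs_of_pos (by positivity), Real.sqrt_sq h0.le, he, Real.exp_add]
  change _ = (1 + v / r v) * _ * _ / p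
  field_simp

lemma integral_inv_sqrt_mul_exp {a b : ℝ} (ha : 0 < a) (hb : 0 ≤ b) :
    ∫ t in Set.Ioi (0 : ℝ), (√t)⁻¹ * Real.exp (-(a * t + b / t)) =
      √Real.pi / √a * Real.exp (-(2 * (√a * √b))) := by
  rcases hb.eq_or_lt with rfl | hb
  · have h := Real.integral_rpow_mul_exp_neg_mul_Ioi (a := 1 / 2) (r := a) (by norm_num) ha
    rw [Real.Gamma_one_half_eq, ← Real.sqrt_eq_rpow, Real.sqrt_div zero_le_one,
      Real.sqrt_one] at h
    rw [Real.sqrt_zero, mul_zero, mul_zero, neg_zero, Real.exp_zero, mul_one, div_eq_mul_one_div,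
      mul_comm, ← h]
    refine setIntegral_congr_fun measurableSet_Ioi fun t ht => ?_
    have ht : 0 < t := ht
    simp only [zero_div, add_zero]
    rw [show (1 / 2 - 1 : ℝ) = -(1 / 2) by norm_num, Real.rpow_neg ht.le, ← Real.sqrt_eq_rpow]
  · have h := integral_inv_sqrt_mul_exp_of_pos (Real.sqrt_pos.2 ha) (Real.sqrt_pos.2 hb)
    rwa [Real.sq_sqrt ha.le, Real.sq_sqrt hb.le] at h

lemma integral_Kker (c α : ℝ) (hc : 0 < c) (hα : 0 < α) (y : ℝ) :
    (∫ x : ℝ, Kker c α x y) =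
      Real.pi ^ (3 / 2 : ℝ) * c ^ (-(1 / 2) : ℝ) * Real.exp (-Real.sqrt c * |y|) := by
  set F : ℝ → ℝ → ℝ := fun x t =>
    (α * √t / (α ^ 2 * t ^ 2 + x ^ 2)) * Real.exp (-(c * t + y ^ 2 / (4 * t))) with hF
  set G : ℝ → ℝ := fun t => (√t)⁻¹ * Real.exp (-(c * t + y ^ 2 / 4 / t)) with hG
  have hFG : ∀ t, 0 < t → ∀ x, F x t = (α * t) / ((α * t) ^ 2 + x ^ 2) * G t := by
    intro t ht x
    have h1 : √t = t * (√t)⁻¹ := by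
      rw [← div_eq_mul_inv, Real.div_sqrt]
    simp only [hF, hG]
    rw [div_div]
    nth_rewrite 1 [h1]
    ring
  have hF0 : ∀ t, 0 < t → ∀ x, 0 ≤ F x t := fun t ht x => by simp only [hF]; positivity
  have hint : ∀ t, 0 < t → ∫ x, F x t = Real.pi * G t := fun t ht => by
    simp only [hFG t ht]
    rw [integral_mul_const, lorentzian_integral (by positivity)]
  have hGint : IntegrableOn G (Set.Ioi 0) := integrableOn_inv_sqrt_mul_exp hc (by positivity)
  have hFint : Integrable (Function.uncurry F) (volume.prod (volume.restrict (Set.Ioi 0))) := by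
    have hm : Measurable (Function.uncurry F) := by
      simp only [hF, Function.uncurry_def]
      fun_prop
    rw [integrable_prod_iff' hm.aestronglyMeasurable]
    constructor
    · filter_upwards [ae_restrict_mem measurableSet_Ioi] with t ht
      have ht : 0 < t := ht
      simp only [Function.uncurry_apply_pair, hFG t ht]
      exact (lorentzian_integrable (by positivity)).mul_const _
    · refine (hGint.const_mul Real.pi).congr ?_
      filter_upwards [ae_restrict_mem measurableSet_Ioi] with t ht
      simp only [Function.uncurry_apply_pair, Real.norm_of_nonneg (hF0 t ht _)]
      exact (hint t ht).symm
  calc (∫ x : ℝ, Kker c α x y) = ∫ x, ∫ t in Set.Ioi 0, F x t := rfl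
    _ = ∫ t in Set.Ioi 0, ∫ x, F x t := integral_integral_swap hFint
    _ = ∫ t in Set.Ioi 0, Real.pi * G t := setIntegral_congr_fun measurableSet_Ioi hint
    _ = Real.pi * (√Real.pi / √c * Real.exp (-(2 * (√c * √(y ^ 2 / 4))))) := by
      rw [integral_const_mul, integral_inv_sqrt_mul_exp hc (by positivity)]
    _ = _ := by
      have h4 : √(y ^ 2 / 4) = |y| / 2 := by
        rw [show y ^ 2 / 4 = (y / 2) ^ 2 by ring, Real.sqrt_sq_eq_abs, abs_div, abs_two]
      rw [h4, show (3 / 2 : ℝ) = 1 + 1 / 2 by norm_num, Real.rpow_add Real.pi_pos, Real.rpow_one,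
        Real.rpow_neg hc.le, ← Real.sqrt_eq_rpow, ← Real.sqrt_eq_rpow,
        show -(2 * (√c * (|y| / 2))) = -√c * |y| by ring]
      ring

lemma integrable_exp_neg_mul_abs {b : ℝ} (hb : 0 < b) :
    Integrable (fun y : ℝ => Real.exp (-b * |y|)) := by
  rw [← integrableOn_univ, ← Set.Iic_union_Ioi (a := (0 : ℝ)), integrableOn_union]
  constructor
  · refine (integrableOn_exp_mul_Iic hb 0).congr_fun (fun y hy => ?_) measurableSet_Iic
    simp only [abs_of_nonpos (Set.mem_Iic.1 hy), neg_mul_neg]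
  · refine (integrableOn_exp_mul_Ioi (neg_lt_zero.2 hb) 0).congr_fun (fun y hy => ?_)
      measurableSet_Ioi
    simp only [abs_of_pos (Set.mem_Ioi.1 hy)]

/-- `∫ K(x,y) dx = π^{3/2} c^{−1/2} e^{−√c|y|}`; in particular `y ↦ ‖K(·,y)‖_{L¹ₓ}`
decays exponentially and belongs to `L^q(ℝ)` for every `1 ≤ q ≤ ∞`. -/
theorem kernel_L1x_identity (c α : ℝ) (hc : 0 < c) (hα : 0 < α) :
    (∀ y : ℝ, (∫ x : ℝ, Kker c α x y) =
      Real.pi ^ (3 / 2 : ℝ) * c ^ (-(1 / 2) : ℝ) * Real.exp (-Real.sqrt c * |y|)) ∧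
    (∀ q : ℝ, 1 ≤ q →
      Integrable (fun y : ℝ => (∫ x : ℝ, Kker c α x y) ^ q) (volume : Measure ℝ)) ∧
    ∃ M : ℝ, ∀ y : ℝ, (∫ x : ℝ, Kker c α x y) ≤ M := by
  have hC : 0 ≤ Real.pi ^ (3 / 2 : ℝ) * c ^ (-(1 / 2) : ℝ) := by positivity
  refine ⟨integral_Kker c α hc hα, fun q hq => ?_,
    Real.pi ^ (3 / 2 : ℝ) * c ^ (-(1 / 2) : ℝ), fun y => ?_⟩
  · simp only [integral_Kker c α hc hα]
    have hb : 0 < √c * q := mul_pos (Real.sqrt_pos.2 hc) (by linarith)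
    refine ((integrable_exp_neg_mul_abs hb).const_mul
      ((Real.pi ^ (3 / 2 : ℝ) * c ^ (-(1 / 2) : ℝ)) ^ q)).congr
      (Filter.Eventually.of_forall fun y => ?_)
    simp only
    rw [Real.mul_rpow hC (Real.exp_pos _).le, ← Real.exp_mul]
    ring_nf
  · rw [integral_Kker c α hc hα]
    refine mul_le_of_le_one_right hC (Real.exp_le_one_iff.2 ?_)
    have : 0 ≤ √c * |y| := by positivity
    linarith
end

section
/- Let c > 0 and α > 0, and let K(x,y) = ∫_0^∞ (α√t/(α²t²+x²))·exp(−(ct + y²/(4t))) dt. Then for every σ with 0 ≤ σ < √c and every s with 0 ≤ s < 3/2, ∫_{ℝ²} |x|^{2s}·exp(2σ|y|)·K(x,y)² dx dy < ∞; that is, the function (x,y) ↦ |x|^s·e^{σ|y|}·K(x,y) belongs to L²(ℝ²). -/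
/-!
The idea is to dominate `|x|^{2s} e^{2σ|y|} K(x,y)²` by a product `f(x) g(y)` of integrable functions.

Fix `0 < ρ ≤ 1` with `(1 - ρ)√c > σ`. In the exponent, a share `1 - ρ` of `ct + y²/(4t)` is bounded
below by `(1 - ρ)√c |y|` (AM-GM), which beats the weight `e^{σ|y|}`. Of the remaining share, `ρct`
gives decay in `t`, and `e^{-ρy²/(4t)}` is bounded by a multiple of `t^{1/8} |y|^{-1/4}`
(`exp_factor_le`). By Young's inequality `α²t² + x² ≥ (αt)^a |x|^{2-a}` for `0 ≤ a ≤ 2`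
(`rational_factor_le`). The `t`-integral then converges whenever `a < 13/8`, so that (`Kker_le`)
`K(x,y) ≤ C e^{-(1-ρ)√c|y|} |y|^{-1/4} |x|^{a-2}`.

Taking `a = 25/16` for `|x| ≤ 1` and `a = 0` for `|x| > 1` bounds `|x|^{2s} K²` by `|x|^{-7/8}` and
`|x|^{2s-4}` respectively, times `|y|^{-1/2} e^{-2(1-ρ)√c|y|}`. The second power is integrable at
infinity because `s < 3/2`. The gain `t^{1/8}` is needed at the origin: without it one must have
`a < 3/2`, and the resulting bound `|x|^{2a-4}` is not integrable at `0` when `s = 0`.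
-/

open MeasureTheory

lemma integrable_comp_abs_of_Ioi {f : ℝ → ℝ} (hf : IntegrableOn f (Set.Ioi 0)) :
    Integrable (fun x : ℝ => f |x|) := by
  have hpos : IntegrableOn (fun x : ℝ => f |x|) (Set.Ioi 0) :=
    hf.congr_fun (fun x hx => by simp [abs_of_pos (Set.mem_Ioi.1 hx)]) measurableSet_Ioi
  have hneg : IntegrableOn (fun x : ℝ => f |x|) (Set.Iio 0) := by
    have := ((Measure.measurePreserving_neg (volume : Measure ℝ)).integrableOn_comp_preimage
      (Homeomorph.neg ℝ).measurableEmbedding (f := fun x : ℝ => f |x|)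
      (s := Set.Ioi 0)).2 hpos
    simpa [Function.comp_def] using this
  rw [← integrableOn_univ, ← @Set.Iio_union_Ici _ _ (0 : ℝ), integrableOn_union,
    integrableOn_Ici_iff_integrableOn_Ioi]
  exact ⟨hneg, hpos⟩

/-- Young's inequality with exponents `2/a` and `2/(2-a)`, without the sharp constants. -/
lemma young_rpow {u v a : ℝ} (hu : 0 ≤ u) (hv : 0 ≤ v) (ha0 : 0 ≤ a) (ha2 : a ≤ 2) :
    u ^ a * v ^ (2 - a) ≤ u ^ 2 + v ^ 2 := by
  have h := Real.geom_mean_le_arith_mean2_weighted (w₁ := a / 2) (w₂ := (2 - a) / 2)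
    (by linarith) (by linarith) (sq_nonneg u) (sq_nonneg v) (by ring)
  rw [← Real.rpow_natCast_mul hu, ← Real.rpow_natCast_mul hv] at h
  have e1 : ((2 : ℕ) : ℝ) * (a / 2) = a := by push_cast; ring
  have e2 : ((2 : ℕ) : ℝ) * ((2 - a) / 2) = 2 - a := by push_cast; ring
  rw [e1, e2] at h
  nlinarith [mul_nonneg (show 0 ≤ 2 - a by linarith) (sq_nonneg u), mul_nonneg ha0 (sq_nonneg v)]

lemma rational_factor_le {α a t x : ℝ} (hα : 0 < α) (ht : 0 < t) (hx : x ≠ 0)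
    (ha0 : 0 ≤ a) (ha2 : a ≤ 2) :
    α * Real.sqrt t / (α ^ 2 * t ^ 2 + x ^ 2)
      ≤ α ^ (1 - a) * |x| ^ (a - 2) * t ^ (1 / 2 - a) := by
  have hx' : 0 < |x| := abs_pos.2 hx
  have h := young_rpow (mul_pos hα ht).le hx'.le ha0 ha2
  rw [Real.mul_rpow hα.le ht.le, mul_pow, sq_abs] at h
  have hD : 0 < α ^ a * t ^ a * |x| ^ (2 - a) := by positivity
  calc α * Real.sqrt t / (α ^ 2 * t ^ 2 + x ^ 2)
      ≤ α * Real.sqrt t / (α ^ a * t ^ a * |x| ^ (2 - a)) := by gcongr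
    _ = α ^ (1 - a) * |x| ^ (a - 2) * t ^ (1 / 2 - a) := by
        rw [Real.sqrt_eq_rpow, Real.rpow_sub hα, Real.rpow_sub ht,
          show a - 2 = -(2 - a) by ring, Real.rpow_neg hx'.le, Real.rpow_one]
        field_simp

lemma exp_neg_le_rpow {u : ℝ} (hu : 0 < u) : Real.exp (-u) ≤ u ^ (-(1 / 8) : ℝ) := by
  rw [Real.exp_neg, Real.rpow_neg hu.le]
  apply inv_anti₀ (by positivity)
  calc u ^ (1 / 8 : ℝ) ≤ (u + 1) ^ (1 / 8 : ℝ) := by gcongr; linarith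
    _ ≤ (u + 1) ^ (1 : ℝ) := by gcongr <;> linarith
    _ = u + 1 := Real.rpow_one _
    _ ≤ Real.exp u := Real.add_one_le_exp u

/-- Splitting of the exponential: a share `1 - ρ` of the exponent gives decay in `|y|`, and the share
`ρ` gives decay in `t` together with a power `t^{1/8}`, paid for by the singularity `|y|^{-1/4}`. -/
lemma exp_factor_le {c ρ t y : ℝ} (hc : 0 < c) (hρ0 : 0 < ρ) (hρ1 : ρ ≤ 1) (ht : 0 < t)
    (hy : y ≠ 0) :
    Real.exp (-(c * t + y ^ 2 / (4 * t)))
      ≤ (ρ / 4) ^ (-(1 / 8) : ℝ) * Real.exp (-((1 - ρ) * Real.sqrt c * |y|)) *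
        |y| ^ (-(1 / 4) : ℝ) * (t ^ (1 / 8 : ℝ) * Real.exp (-(ρ * c) * t)) := by
  have hy' : 0 < |y| := abs_pos.2 hy
  -- The difference of the two sides is a perfect square over `4t`.
  have hamgm : Real.sqrt c * |y| ≤ c * t + y ^ 2 / (4 * t) := by
    have h1 : c * t + y ^ 2 / (4 * t) - Real.sqrt c * |y|
        = (2 * Real.sqrt c * t - |y|) ^ 2 / (4 * t) := by
      field_simp
      nlinarith [Real.sq_sqrt hc.le, sq_abs y]
    have h2 : 0 ≤ (2 * Real.sqrt c * t - |y|) ^ 2 / (4 * t) := by positivity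
    linarith
  have hu : 0 < ρ / 4 * |y| ^ 2 / t := by positivity
  have e : (ρ / 4 * |y| ^ 2 / t) ^ (-(1 / 8) : ℝ)
      = (ρ / 4) ^ (-(1 / 8) : ℝ) * |y| ^ (-(1 / 4) : ℝ) * t ^ (1 / 8 : ℝ) := by
    rw [Real.div_rpow (by positivity) ht.le, Real.mul_rpow (by positivity) (by positivity),
      ← Real.rpow_natCast_mul hy'.le, Real.rpow_neg ht.le, div_inv_eq_mul]
    norm_num
  calc Real.exp (-(c * t + y ^ 2 / (4 * t)))
      ≤ Real.exp (-((1 - ρ) * Real.sqrt c * |y|) + (-(ρ * c) * t)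
          + (-(ρ / 4 * |y| ^ 2 / t))) := by
        apply Real.exp_le_exp.2
        have := mul_le_mul_of_nonneg_left hamgm (show 0 ≤ 1 - ρ by linarith)
        have e2 : ρ / 4 * |y| ^ 2 / t = ρ * (y ^ 2 / (4 * t)) := by
          rw [sq_abs]; field_simp
        rw [e2]
        linarith
    _ = Real.exp (-((1 - ρ) * Real.sqrt c * |y|)) * Real.exp (-(ρ * c) * t)
          * Real.exp (-(ρ / 4 * |y| ^ 2 / t)) := by rw [Real.exp_add, Real.exp_add]
    _ ≤ Real.exp (-((1 - ρ) * Real.sqrt c * |y|)) * Real.exp (-(ρ * c) * t)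
          * (ρ / 4 * |y| ^ 2 / t) ^ (-(1 / 8) : ℝ) := by
        gcongr; exact exp_neg_le_rpow hu
    _ = _ := by rw [e]; ring

lemma Kker_nonneg {c α : ℝ} (hα : 0 < α) (x y : ℝ) : 0 ≤ Kker c α x y := by
  unfold Kker
  positivity

/-- Pointwise bound on the kernel. The constraint `a < 13/8` is integrability at `0` of the power
`t^{5/8-a}` left after the two factors of the integrand have been estimated. -/
lemma Kker_le {c α ρ a : ℝ} (hc : 0 < c) (hα : 0 < α) (hρ0 : 0 < ρ) (hρ1 : ρ ≤ 1)
    (ha0 : 0 ≤ a) (ha : a < 13 / 8) :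
    ∃ C : ℝ, ∀ x y : ℝ, x ≠ 0 → y ≠ 0 → Kker c α x y
      ≤ C * (Real.exp (-((1 - ρ) * Real.sqrt c * |y|)) * |y| ^ (-(1 / 4) : ℝ)) *
        |x| ^ (a - 2) := by
  refine ⟨α ^ (1 - a) * (ρ / 4) ^ (-(1 / 8) : ℝ) *
    ∫ t in Set.Ioi (0 : ℝ), t ^ (5 / 8 - a) * Real.exp (-(ρ * c) * t), fun x y hx hy => ?_⟩
  have hint : IntegrableOn (fun t : ℝ => t ^ (5 / 8 - a) * Real.exp (-(ρ * c) * t))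
      (Set.Ioi 0) := by
    simpa using integrableOn_rpow_mul_exp_neg_mul_rpow (s := 5 / 8 - a) (p := 1) (b := ρ * c)
      (by linarith) one_pos (by positivity)
  set A := α ^ (1 - a) * (ρ / 4) ^ (-(1 / 8) : ℝ) *
    (Real.exp (-((1 - ρ) * Real.sqrt c * |y|)) * |y| ^ (-(1 / 4) : ℝ)) * |x| ^ (a - 2) with hA
  calc Kker c α x y
      ≤ ∫ t in Set.Ioi (0 : ℝ), A * (t ^ (5 / 8 - a) * Real.exp (-(ρ * c) * t)) := by
        unfold Kker
        refine integral_mono_of_nonneg (Filter.Eventually.of_forall fun t => by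
          simp only [Pi.zero_apply]; positivity) (hint.const_mul A) ?_
        filter_upwards [ae_restrict_mem measurableSet_Ioi] with t ht
        have ht : 0 < t := ht
        have h1 := rational_factor_le hα ht hx ha0 (by linarith)
        have h2 := exp_factor_le hc hρ0 hρ1 ht hy
        refine (mul_le_mul h1 h2 (by positivity) (by positivity)).trans_eq ?_
        rw [hA, show (5 / 8 - a : ℝ) = (1 / 2 - a) + 1 / 8 by ring, Real.rpow_add ht]
        ring
    _ = _ := by rw [integral_const_mul, hA]; ring

lemma measurable_Kker (c α : ℝ) : Measurable fun z : ℝ × ℝ => Kker c α z.1 z.2 := by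
  unfold Kker
  apply StronglyMeasurable.measurable
  apply StronglyMeasurable.integral_prod_right
    (f := fun (z : ℝ × ℝ) (t : ℝ) => (α * Real.sqrt t / (α ^ 2 * t ^ 2 + z.1 ^ 2)) *
      Real.exp (-(c * t + z.2 ^ 2 / (4 * t))))
  apply Measurable.stronglyMeasurable
  unfold Function.uncurry
  fun_prop

lemma integrable_x_profile {s : ℝ} (hs : s < 3 / 2) :
    Integrable (fun x : ℝ => if |x| ≤ 1 then |x| ^ (-(7 / 8) : ℝ) else |x| ^ (2 * s - 4)) := by
  apply integrable_comp_abs_of_Ioi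
    (f := fun r : ℝ => if r ≤ 1 then r ^ (-(7 / 8) : ℝ) else r ^ (2 * s - 4))
  rw [← Set.Ioc_union_Ioi_eq_Ioi zero_le_one, integrableOn_union]
  constructor
  · have h := intervalIntegral.intervalIntegrable_rpow' (a := 0) (b := 1)
      (show (-1 : ℝ) < -(7 / 8) by norm_num)
    rw [intervalIntegrable_iff_integrableOn_Ioc_of_le zero_le_one] at h
    exact h.congr_fun (fun r hr => by simp [hr.2]) measurableSet_Ioc
  · exact (integrableOn_Ioi_rpow_of_lt (show 2 * s - 4 < -1 by linarith) one_pos).congr_fun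
      (fun r hr => by simp [not_le.2 (Set.mem_Ioi.1 hr)]) measurableSet_Ioi

lemma integrable_y_profile {b : ℝ} (hb : 0 < b) :
    Integrable (fun y : ℝ => |y| ^ (-(1 / 2) : ℝ) * Real.exp (-b * |y|)) := by
  apply integrable_comp_abs_of_Ioi (f := fun r : ℝ => r ^ (-(1 / 2) : ℝ) * Real.exp (-b * r))
  simpa using integrableOn_rpow_mul_exp_neg_mul_rpow (s := -(1 / 2)) (p := 1) (b := b)
    (by norm_num) one_pos hb

/-- The pointwise bound of `Kker_le`, squared and multiplied by the weight, separates the variables. -/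
lemma weighted_sq_le {c α ρ a σ x y C w : ℝ} (hα : 0 < α) (hx : x ≠ 0) (hy : y ≠ 0)
    (h : Kker c α x y
      ≤ C * (Real.exp (-((1 - ρ) * Real.sqrt c * |y|)) * |y| ^ (-(1 / 4) : ℝ)) *
        |x| ^ (a - 2)) :
    |x| ^ w * Real.exp (2 * σ * |y|) * Kker c α x y ^ 2
      ≤ C ^ 2 * (|x| ^ (w + (2 * a - 4)) * (|y| ^ (-(1 / 2) : ℝ) *
        Real.exp (-(2 * ((1 - ρ) * Real.sqrt c - σ)) * |y|))) := by
  have hx' : 0 < |x| := abs_pos.2 hx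
  have hy' : 0 < |y| := abs_pos.2 hy
  have h2 := pow_le_pow_left₀ (Kker_nonneg hα x y) h 2
  refine (mul_le_mul_of_nonneg_left h2 (by positivity)).trans_eq ?_
  rw [Real.rpow_add hx', show 2 * a - 4 = (a - 2) + (a - 2) by ring, Real.rpow_add hx',
    show (-(1 / 2) : ℝ) = -(1 / 4) + -(1 / 4) by norm_num, Real.rpow_add hy',
    show -(2 * ((1 - ρ) * Real.sqrt c - σ)) * |y|
      = 2 * σ * |y| + (-((1 - ρ) * Real.sqrt c * |y|) + -((1 - ρ) * Real.sqrt c * |y|)) by ring,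
    Real.exp_add, Real.exp_add]
  ring

/-- `(x,y) ↦ |x|^s e^{σ|y|} K(x,y)` belongs to `L²(ℝ²)` for `0 ≤ σ < √c`, `0 ≤ s < 3/2`. -/
theorem kernel_weighted_L2 (c α : ℝ) (hc : 0 < c) (hα : 0 < α) :
    ∀ σ s : ℝ, 0 ≤ σ → σ < Real.sqrt c → 0 ≤ s → s < 3 / 2 →
      Integrable
        (fun z : ℝ × ℝ =>
          |z.1| ^ (2 * s) * Real.exp (2 * σ * |z.2|) * Kker c α z.1 z.2 ^ 2)
        (volume : Measure (ℝ × ℝ)) := by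
  intro σ s hσ0 hσ hs0 hs
  have hsc : 0 < Real.sqrt c := Real.sqrt_pos.2 hc
  obtain ⟨ρ, hρ0, hρ1, hb⟩ :
      ∃ ρ : ℝ, 0 < ρ ∧ ρ ≤ 1 ∧ 0 < 2 * ((1 - ρ) * Real.sqrt c - σ) := by
    -- This choice makes `(1 - ρ)√c` the midpoint of `σ` and `√c`.
    refine ⟨(1 - σ / Real.sqrt c) / 2, ?_, ?_, ?_⟩
    · have := (div_lt_one hsc).2 hσ
      linarith
    · have : 0 ≤ σ / Real.sqrt c := by positivity
      linarith
    · have : (1 - (1 - σ / Real.sqrt c) / 2) * Real.sqrt c = (Real.sqrt c + σ) / 2 := by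
        field_simp; ring
      rw [this]; linarith
  obtain ⟨C₁, hC₁⟩ := Kker_le (a := 25 / 16) hc hα hρ0 hρ1 (by norm_num) (by norm_num)
  obtain ⟨C₂, hC₂⟩ := Kker_le (a := 0) hc hα hρ0 hρ1 le_rfl (by norm_num)
  have hdom := ((integrable_x_profile hs).mul_prod (integrable_y_profile hb)).const_mul
    (C₁ ^ 2 + C₂ ^ 2)
  rw [← Measure.volume_eq_prod] at hdom
  refine hdom.mono' ?_ ?_
  · have := measurable_Kker c α
    exact Measurable.aestronglyMeasurable (by fun_prop)
  -- The pointwise bounds hold only off the two axes, which are null sets.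
  have hne : ∀ᵐ r : ℝ, r ≠ 0 := by simp [ae_iff]
  have hx : ∀ᵐ z : ℝ × ℝ, z.1 ≠ 0 := by
    rw [Measure.volume_eq_prod]; exact Measure.quasiMeasurePreserving_fst.ae hne
  have hy : ∀ᵐ z : ℝ × ℝ, z.2 ≠ 0 := by
    rw [Measure.volume_eq_prod]; exact Measure.quasiMeasurePreserving_snd.ae hne
  filter_upwards [hx, hy] with z hz1 hz2
  have hz1' : 0 < |z.1| := abs_pos.2 hz1
  have hz2' : 0 < |z.2| := abs_pos.2 hz2
  rw [Real.norm_of_nonneg (by positivity)]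
  split_ifs with hle
  · refine (weighted_sq_le hα hz1 hz2 (hC₁ z.1 z.2 hz1 hz2)).trans ?_
    have : |z.1| ^ (2 * s + (2 * (25 / 16) - 4)) ≤ |z.1| ^ (-(7 / 8) : ℝ) :=
      Real.rpow_le_rpow_of_exponent_ge hz1' hle (by linarith)
    gcongr
    nlinarith [sq_nonneg C₂]
  · refine (weighted_sq_le hα hz1 hz2 (hC₂ z.1 z.2 hz1 hz2)).trans ?_
    rw [show 2 * s + (2 * 0 - 4) = 2 * s - 4 by ring]
    gcongr
    nlinarith [sq_nonneg C₁]
end
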